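/- arXiv:2001.00882 — 2 statements merged into one kernel-verified Lean document; each statement's English description precedes it below -/
import Mathlib

section
/- Assume Conditions (C). There exists a constant A > 0 such that for any pair of sequences (m, y) verifying Conditions (C2): P(sup_{0 ≤ t ≤ m} (X(t) − E[X(t)]) ≥ y) ≤ A·exp(−y²/(A(y·n^{1/3} + m))). -/
open MeasureTheory Filter Asymptotics
open scoped Classical ENNReal Topology

noncomputable section

/-- `ℓ_n`: the total weight. -/
def ell (w : ∀ n : ℕ, Fin n → ℝ) (n : ℕ) : ℝ := ∑ i, w n i

/-- Conditions (C) on the triangular array of weights, relative to the law `μ` of the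
limiting random variable `W`. -/
structure CondC (w : ∀ n : ℕ, Fin n → ℝ) (μ : Measure ℝ) : Prop where
  isProb : IsProbabilityMeasure μ
  pos : ∀ᵐ x ∂μ, 0 < x
  w_pos : ∀ n, ∀ i : Fin n, 0 < w n i
  w_anti : ∀ n, ∀ i j : Fin n, i ≤ j → w n j ≤ w n i
  int3 : Integrable (fun x => x ^ 3) μ
  moment_eq : ∫ x, x ^ 2 ∂μ = ∫ x, x ∂μ
  weak : ∀ g : BoundedContinuousFunction ℝ ℝ,
    Tendsto (fun n : ℕ => (∑ i : Fin n, g (w n i)) / (n : ℝ)) atTop (𝓝 (∫ x, g x ∂μ))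
  ell_asymp : (fun n : ℕ => ell w n - (∫ x, x ∂μ) * (n : ℝ)) =o[atTop]
      fun n : ℕ => (n : ℝ) ^ ((2 : ℝ) / 3)
  sq_asymp : (fun n : ℕ => (∑ i : Fin n, (w n i) ^ 2) - (∫ x, x ^ 2 ∂μ) * (n : ℝ)) =o[atTop]
      fun n : ℕ => (n : ℝ) ^ ((2 : ℝ) / 3)
  cube_asymp : (fun n : ℕ => (∑ i : Fin n, (w n i) ^ 3) - (∫ x, x ^ 3 ∂μ) * (n : ℝ)) =o[atTop]
      fun _ : ℕ => (1 : ℝ)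
  max_asymp : (fun n : ℕ => ⨆ i : Fin n, w n i) =o[atTop] fun n : ℕ => (n : ℝ) ^ ((1 : ℝ) / 3)

/-- The constant `C = E[W³]/E[W]`. -/
def Cconst (μ : Measure ℝ) : ℝ := (∫ x, x ^ 3 ∂μ) / (∫ x, x ∂μ)

/-- The critical percolation parameter `p_f = (ℓ_n^{1/3} + f_n)/ℓ_n^{4/3}`. -/
def pf (w : ∀ n : ℕ, Fin n → ℝ) (f : ℕ → ℝ) (n : ℕ) : ℝ :=
  (ell w n ^ ((1 : ℝ) / 3) + f n) / ell w n ^ ((4 : ℝ) / 3)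

/-- A Bernoulli-type measure on `Bool` with parameter `p`. -/
def bern (p : ℝ) : Measure Bool :=
  ENNReal.ofReal (1 - p) • Measure.dirac false + ENNReal.ofReal p • Measure.dirac true

/-- The law of the independent edge indicators of the rank-1 inhomogeneous random graph
`G(W,p)`: the indicator attached to the (ordered) pair `(i,j)` is Bernoulli with success
probability `1 - exp (- w i * w j * p)`, all independent. -/
def graphMeasure (n : ℕ) (wn : Fin n → ℝ) (p : ℝ) : Measure (Fin n → Fin n → Bool) :=
  Measure.pi fun i => Measure.pi fun j => bern (1 - Real.exp (-(wn i * wn j * p)))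

/-- The simple graph built from a sample of edge indicators: `i ~ j` iff `i ≠ j` and the
indicator of the pair `(min i j, max i j)` is `true`. -/
def graphOf {n : ℕ} (ω : Fin n → Fin n → Bool) : SimpleGraph (Fin n) :=
  SimpleGraph.fromRel fun i j => ω (min i j) (max i j) = true

/-- The size (number of vertices) of a connected component. -/
def csize {n : ℕ} (G : SimpleGraph (Fin n)) (c : G.ConnectedComponent) : ℕ :=
  Nat.card {v : Fin n // G.connectedComponentMk v = c}

/-- The weight of a connected component: sum of the weights of its vertices. -/
def cweight {n : ℕ} (wn : Fin n → ℝ) (G : SimpleGraph (Fin n)) (c : G.ConnectedComponent) : ℝ :=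
  ∑ v : Fin n, if G.connectedComponentMk v = c then wn v else 0

/-- The number of edges of a connected component. -/
def cedges {n : ℕ} (G : SimpleGraph (Fin n)) (c : G.ConnectedComponent) : ℕ :=
  Nat.card {e : Sym2 (Fin n) // e ∈ G.edgeSet ∧ ∀ v ∈ e, G.connectedComponentMk v = c}

/-- The surplus (excess) of a connected component: edges − vertices + 1. -/
def csurplus {n : ℕ} (G : SimpleGraph (Fin n)) (c : G.ConnectedComponent) : ℤ :=
  (cedges G c : ℤ) - (csize G c : ℤ) + 1

/-- `c` is a largest connected component. -/
def isLargest {n : ℕ} (G : SimpleGraph (Fin n)) (c : G.ConnectedComponent) : Prop :=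
  ∀ c', csize G c' ≤ csize G c

/-- The finset of connected components of a graph on `Fin n`. -/
def comps {n : ℕ} (G : SimpleGraph (Fin n)) : Finset G.ConnectedComponent :=
  Finset.univ.image G.connectedComponentMk

/-- The law of the size-biased random order without replacement `(v(1),…,v(n))`, seen as a
measure on functions `Fin n → Fin n` (supported on permutations `σ`, with
`P(v = σ) = ∏_i w (σ i) / (ℓ_n − ∑_{k<i} w (σ k))`). -/
def sbMeasure (n : ℕ) (wn : Fin n → ℝ) : Measure (Fin n → Fin n) :=
  Measure.sum fun σ : Equiv.Perm (Fin n) =>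
    ENNReal.ofReal (∏ i : Fin n,
        wn (σ i) / ((∑ k, wn k) - ∑ k ∈ Finset.univ.filter fun k => k < i, wn (σ k))) •
      Measure.dirac ⇑σ

/-- The joint law of (edge indicators of `G(W,p)`, size-biased order), the two being
independent. -/
def expMeasure' (n : ℕ) (wn : Fin n → ℝ) (p : ℝ) :
    Measure ((Fin n → Fin n → Bool) × (Fin n → Fin n)) :=
  Measure.sum fun σ : Equiv.Perm (Fin n) =>
    ENNReal.ofReal (∏ i : Fin n,
        wn (σ i) / ((∑ k, wn k) - ∑ k ∈ Finset.univ.filter fun k => k < i, wn (σ k))) •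
      (graphMeasure n wn p).map fun g => (g, ⇑σ)

/-- `sbW wn vord k` is `w_{v(k)}` (1-based), with the conventions `w_{v(0)} = 0` and
`w_{v(k)} = 0` for `k > n`. -/
def sbW {n : ℕ} (wn : Fin n → ℝ) (vord : Fin n → Fin n) (k : ℕ) : ℝ :=
  if h : k - 1 < n then (if k = 0 then 0 else wn (vord ⟨k - 1, h⟩)) else 0

/-- The (0-based) first position, in the order `vord`, of a vertex of the component `c`;
this governs the order in which components are discovered by the breadth-first walk. -/
def firstIdx {n : ℕ} (G : SimpleGraph (Fin n)) (vord : Fin n → Fin n)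
    (c : G.ConnectedComponent) : ℕ :=
  sInf {i : ℕ | ∃ h : i < n, G.connectedComponentMk (vord ⟨i, h⟩) = c}

/-- The number of vertices explored strictly before the exploration of the component `c`
starts: components are explored in the order of their first appearance in `vord`, and the
exploration of `c` occupies the steps `startT c + 1, …, startT c + csize c`. -/
def startT {n : ℕ} (G : SimpleGraph (Fin n)) (vord : Fin n → Fin n)
    (c : G.ConnectedComponent) : ℕ :=
  ∑ v : Fin n, if firstIdx G vord (G.connectedComponentMk v) < firstIdx G vord c then 1 else 0

/-- The state (explored vertices, queue of discovered-but-unexplored vertices) of the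
breadth-first walk after `i` steps; roots are chosen as the first undiscovered vertex in the
order `vord`, and children are queued in the order `vord`. -/
def bfwQueue {n : ℕ} (G : SimpleGraph (Fin n)) (vord : Fin n → Fin n) :
    ℕ → Finset (Fin n) × List (Fin n)
  | 0 => (∅, [])
  | i + 1 =>
    let s := bfwQueue G vord i
    let q : List (Fin n) :=
      if s.2.isEmpty then ((List.ofFn vord).filter fun v => decide (v ∉ s.1)).take 1 else s.2
    match q with
    | [] => (s.1, [])
    | v :: rest =>
      (insert v s.1,
        rest ++ (List.ofFn vord).filter fun u => decide (G.Adj v u ∧ u ∉ s.1 ∧ u ∉ q))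

/-- The reflected exploration process `L` of the breadth-first walk:
`L_0 = 1`, `L_{i+1} = max (L_i + c(i+1) - 1) 1`. -/
def Lproc {n : ℕ} (G : SimpleGraph (Fin n)) (vord : Fin n → Fin n) (i : ℕ) : ℕ :=
  max (bfwQueue G vord i).2.length 1

/-- `discNbrs G vord i` is the number of neighbours of `v(i+1)` (0-based: `vord i`) outside
`{v(1),…,v(i+1)}`, i.e. the increment `X⁰_{i+1} + 1` of the process `L⁰`. -/
def discNbrs {n : ℕ} (G : SimpleGraph (Fin n)) (vord : Fin n → Fin n) (i : ℕ) : ℕ :=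
  Nat.card {j : Fin n // (∃ h : i < n, G.Adj (vord ⟨i, h⟩) j) ∧
    ∀ k : ℕ, ∀ hk : k < n, k ≤ i → vord ⟨k, hk⟩ ≠ j}

/-- The process `L⁰`: `L⁰_0 = 1`, `L⁰_{i+1} = L⁰_i + X⁰_{i+1}` where
`X⁰_{i+1} = ∑_{j ∉ {v(1),…,v(i+1)}} Y(v(i+1), j) − 1`. -/
def L0 {n : ℕ} (G : SimpleGraph (Fin n)) (vord : Fin n → Fin n) (m : ℕ) : ℤ :=
  1 - (m : ℤ) + ∑ i ∈ Finset.range m, (discNbrs G vord i : ℤ)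

/-- The deterministic-drift process `L̃^h`, defined by
`L̃^h_m + m − 1 = ∑_{i=1}^m ∑_{k > i+h} (1 − exp (−w_{v(i)} w_{v(k)} p))`,
the inner sum being over positions `k ≤ n` in the size-biased order. -/
def Ltilde {n : ℕ} (wn : Fin n → ℝ) (p : ℝ) (vord : Fin n → Fin n) (h m : ℕ) : ℝ :=
  1 - (m : ℝ) + ∑ i ∈ Finset.range m,
    if hi : i < n then
      ∑ k : Fin n, if i + h < (k : ℕ) then
        1 - Real.exp (-(wn (vord ⟨i, hi⟩) * wn (vord k) * p)) else 0
    else 0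

/-- The law of the independent exponential clocks `(T_k)_{k ≤ n}`, `T_k` of rate `w_k / ℓ_n`. -/
def clocksMeasure (n : ℕ) (wn : Fin n → ℝ) : Measure (Fin n → ℝ) :=
  Measure.pi fun k => ProbabilityTheory.expMeasure (wn k / ∑ i, wn i)

/-- `N(x)`: the number of clocks that have rung by time `x`. -/
def Nclock {n : ℕ} (x : ℝ) (ω : Fin n → ℝ) : ℕ :=
  ∑ k : Fin n, if ω k ≤ x then 1 else 0

/-- `X(x)`: the total weight of the clocks that have rung by time `x`. -/
def Xclock {n : ℕ} (wn : Fin n → ℝ) (x : ℝ) (ω : Fin n → ℝ) : ℝ :=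
  ∑ k : Fin n, if ω k ≤ x then wn k else 0

/-- Conditions (C2) on a pair of sequences `(a, b)`, relative to the constant `Ā`. -/
structure Cond2 (w : ∀ n : ℕ, Fin n → ℝ) (Abar : ℝ) (a b : ℕ → ℝ) : Prop where
  exp_lt : ∀ᶠ n : ℕ in atTop,
    Real.exp (-(b n) ^ 2 / (Abar * (b n * (n : ℝ) ^ ((1 : ℝ) / 3) + a n))) < 1 / 4
  a_top : Tendsto a atTop atTop
  b_top : Tendsto b atTop atTop
  a_lito : a =o[atTop] fun n : ℕ => (n : ℝ)
  b_bigO : b =O[atTop] a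
  a_bigO : a =O[atTop] fun n => b n * ell w n ^ ((1 : ℝ) / 3)
  a_sq_bigO : (fun n => a n ^ 2) =O[atTop] fun n => b n * ell w n

/-- Conditions (C3) on a quadruple of sequences `(a, b, c, d)`. -/
structure Cond3 (w : ∀ n : ℕ, Fin n → ℝ) (Abar : ℝ) (a b c d : ℕ → ℝ) : Prop where
  sum_lito : (fun n => a n + c n) =o[atTop] fun n : ℕ => (n : ℝ)
  diff_top : Tendsto (fun n => a n - b n) atTop atTop
  d_bigO : d =O[atTop] fun n => a n - b n
  c2 : Cond2 w Abar (fun n => Real.sqrt ((a n - b n) * (a n + c n))) d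

/-- The list of component sizes, sorted in decreasing order. -/
def sizesList {n : ℕ} (G : SimpleGraph (Fin n)) : List ℕ :=
  (((comps G).val.map fun c => csize G c).sort (· ≤ ·)).reverse

/-- `kthSize G k` is the size of the `(k+1)`-st largest connected component of `G`
(`0` if there is no such component). -/
def kthSize {n : ℕ} (G : SimpleGraph (Fin n)) (k : ℕ) : ℕ := (sizesList G).getD k 0

end

/-!
Let `X'` be the process of an independent copy of the clocks. By Jensen's inequality,
`exp (X(t) - E[X(t)])` is at most the conditional expectation of `exp (X(t) - X'(t))`, so Markov's
inequality reduces the tail bound to the expectation of `sup_{t ≤ m} exp (X(t) - X'(t))`.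
Exchanging the two copies of some of the clocks preserves their joint law, hence the weights may be
given random signs. The arithmetic-geometric inequality then separates the signed versions of `X`
and `X'`, each of which is, for fixed times, a random walk with independent symmetric steps listed
in the order of the times: Doob's `L²` maximal inequality, averaged over the signs, replaces the
supremum by the value at time `m` up to the factor `4`. What remains is a product of hyperbolic
cosines, bounded by independence, and the choice of a scale `θ` for the weights.
-/

section Rademacher

variable {ι : Type*}

/-- The sum `∑_{k ∈ S} ε_k v_k` with random signs; the signs are encoded as units of `ℤ`. -/
def rademacherSum (v : ι → ℝ) (S : Finset ι) (ε : ι → ℤˣ) : ℝ :=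
  ∑ k ∈ S, ((ε k : ℤ) : ℝ) * v k

theorem rademacherSum_update_of_notMem (v : ι → ℝ) {S : Finset ι} {a : ι} (ha : a ∉ S)
    (ε : ι → ℤˣ) (s : ℤˣ) :
    rademacherSum v S (Function.update ε a s) = rademacherSum v S ε :=
  Finset.sum_congr rfl fun k hk => by
    rw [Function.update_of_ne (ne_of_mem_of_not_mem hk ha)]

variable [Fintype ι]

theorem sum_exp_rademacherSum (v : ι → ℝ) (S : Finset ι) :
    ∑ ε, Real.exp (rademacherSum v S ε) = 2 ^ Fintype.card ι * ∏ k ∈ S, Real.cosh (v k) := by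
  have hsigns (k : ι) : ∑ s : ℤˣ, Real.exp (if k ∈ S then ((s : ℤ) : ℝ) * v k else 0)
      = 2 * if k ∈ S then Real.cosh (v k) else 1 := by
    rw [UnitsInt.univ, Finset.sum_pair (by decide)]
    split_ifs
    · simp [Real.cosh_eq]
      ring
    · norm_num
  calc ∑ ε, Real.exp (rademacherSum v S ε)
      = ∑ ε : ι → ℤˣ, ∏ k, Real.exp (if k ∈ S then ((ε k : ℤ) : ℝ) * v k else 0) := by
        simp only [rademacherSum, ← Real.exp_sum, Finset.sum_ite_mem, Finset.univ_inter]
    _ = ∏ k, ∑ s : ℤˣ, Real.exp (if k ∈ S then ((s : ℤ) : ℝ) * v k else 0) := by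
        rw [Finset.prod_univ_sum, Fintype.piFinset_univ]
    _ = 2 ^ Fintype.card ι * ∏ k ∈ S, Real.cosh (v k) := by
        simp only [hsigns, Finset.prod_mul_distrib, Finset.prod_const, Finset.card_univ,
          Finset.prod_ite_mem, Finset.univ_inter]

theorem sum_le_sum_mul_exp_sign_mul {f : (ι → ℤˣ) → ℝ} {a : ι} (hf : 0 ≤ f)
    (hflip : ∀ ε, f (Function.update ε a (-ε a)) = f ε) (c : ℝ) :
    ∑ ε, f ε ≤ ∑ ε, f ε * Real.exp (((ε a : ℤ) : ℝ) * c) := by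
  have hinv : Function.Involutive fun ε : ι → ℤˣ => Function.update ε a (-ε a) := fun ε => by simp
  have hsymm : ∑ ε, f ε * Real.exp (((ε a : ℤ) : ℝ) * c)
      = ∑ ε, f ε * Real.exp (-(((ε a : ℤ) : ℝ) * c)) := by
    rw [← Equiv.sum_comp hinv.toPerm]
    simp [hflip]
  have hcosh : ∑ ε, 2 * f ε ≤ ∑ ε, f ε * Real.exp (((ε a : ℤ) : ℝ) * c)
      + ∑ ε, f ε * Real.exp (-(((ε a : ℤ) : ℝ) * c)) := by
    rw [← Finset.sum_add_distrib]
    refine Finset.sum_le_sum fun ε _ => ?_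
    have := mul_le_mul_of_nonneg_left (Real.one_le_cosh (((ε a : ℤ) : ℝ) * c)) (hf ε)
    rw [Real.cosh_eq] at this
    linarith
  rw [← hsymm, ← Finset.mul_sum] at hcosh
  linarith

theorem max_sq_sub_two_mul_max_mul_le {R : Type*} [CommRing R] [LinearOrder R]
    [IsStrictOrderedRing R] (x z : R) :
    max x z ^ 2 - 2 * (max x z * z) ≤ x ^ 2 - 2 * (x * z) := by
  rcases le_total x z with h | h
  · rw [max_eq_right h]
    linarith [sq_nonneg (x - z)]
  · rw [max_eq_left h]

variable {α : Type*} [LinearOrder α]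

/-- Discrete form of `E[M²] ≤ 2 E[M Z]` for the running maximum `M` of the submartingale `Z`. The
flip invariance of `M` expresses that it does not depend on the signs outside `S`. -/
theorem exists_majorant_exp_rademacherSum (o : ι → α) (v : ι → ℝ) (S : Finset ι) :
    ∃ M : (ι → ℤˣ) → ℝ,
      (∀ ε t, Real.exp (rademacherSum v (S.filter fun k => o k ≤ t) ε) ≤ M ε) ∧
      (∀ ε, ∀ a ∉ S, M (Function.update ε a (-ε a)) = M ε) ∧
      ∑ ε, (M ε ^ 2 - 2 * (M ε * Real.exp (rademacherSum v S ε))) ≤ 0 := by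
  induction S using Finset.induction_on_max_value o with
  | empty =>
    refine ⟨fun _ => 1, by simp [rademacherSum], by simp, Finset.sum_nonpos fun ε _ => ?_⟩
    norm_num [rademacherSum]
  | insert a S ha hmax ih =>
    obtain ⟨M, hM, hflip, hsum⟩ := ih
    set Z : (ι → ℤˣ) → ℝ := fun ε => Real.exp (rademacherSum v S ε)
    set Z' : (ι → ℤˣ) → ℝ := fun ε => Real.exp (rademacherSum v (insert a S) ε)
    have hZ' (ε : ι → ℤˣ) : Z' ε = Z ε * Real.exp (((ε a : ℤ) : ℝ) * v a) := by
      simp only [Z, Z', rademacherSum, Finset.sum_insert ha, ← Real.exp_add, add_comm]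
    have hM_nonneg (ε : ι → ℤˣ) : 0 ≤ M ε := (Real.exp_pos _).le.trans (hM ε (o a))
    have hsub : ∑ ε, M ε * Z ε ≤ ∑ ε, M ε * Z' ε := by
      simp only [hZ', ← mul_assoc]
      refine sum_le_sum_mul_exp_sign_mul (a := a)
        (fun ε => mul_nonneg (hM_nonneg ε) (Real.exp_pos _).le) (fun ε => ?_) _
      simp only [hflip ε a ha, rademacherSum_update_of_notMem v ha]
    refine ⟨fun ε => max (M ε) (Z' ε), fun ε t => ?_, fun ε b hb => ?_, ?_⟩
    · by_cases hat : o a ≤ t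
      · have hall : ∀ k ∈ insert a S, o k ≤ t :=
          Finset.forall_mem_insert _ _ _ |>.2 ⟨hat, fun k hk => (hmax k hk).trans hat⟩
        rw [Finset.filter_true_of_mem hall]
        exact le_max_right _ _
      · rw [Finset.filter_insert, if_neg hat]
        exact le_max_of_le_left (hM ε t)
    · simp only [Z', hflip ε b fun h => hb (Finset.mem_insert_of_mem h),
        rademacherSum_update_of_notMem v hb]
    · calc ∑ ε, (max (M ε) (Z' ε) ^ 2 - 2 * (max (M ε) (Z' ε) * Z' ε))
          ≤ ∑ ε, (M ε ^ 2 - 2 * (M ε * Z' ε)) :=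
            Finset.sum_le_sum fun ε _ => max_sq_sub_two_mul_max_mul_le _ _
        _ ≤ ∑ ε, (M ε ^ 2 - 2 * (M ε * Z ε)) := by
            simp only [Finset.sum_sub_distrib, ← Finset.mul_sum]
            linarith
        _ ≤ 0 := hsum

/-- Doob's `L²` maximal inequality for the submartingale of exponentials of Rademacher sums. -/
theorem exists_majorant_sum_sq_le (o : ι → α) (v : ι → ℝ) (S : Finset ι) :
    ∃ M : (ι → ℤˣ) → ℝ,
      (∀ ε t, Real.exp (rademacherSum v (S.filter fun k => o k ≤ t) ε) ≤ M ε) ∧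
      ∑ ε, M ε ^ 2 ≤ 4 * ∑ ε, Real.exp (rademacherSum v S ε) ^ 2 := by
  obtain ⟨M, hM, -, hsum⟩ := exists_majorant_exp_rademacherSum o v S
  refine ⟨M, hM, ?_⟩
  have hAMGM (ε : ι → ℤˣ) : M ε ^ 2 - 4 * Real.exp (rademacherSum v S ε) ^ 2
      ≤ 2 * (M ε ^ 2 - 2 * (M ε * Real.exp (rademacherSum v S ε))) := by
    linarith [sq_nonneg (M ε - 2 * Real.exp (rademacherSum v S ε))]
  have := Finset.sum_le_sum fun ε (_ : ε ∈ Finset.univ) => hAMGM ε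
  rw [Finset.sum_sub_distrib, ← Finset.mul_sum, ← Finset.mul_sum] at this
  linarith

end Rademacher

section WeightUpTo

variable {ι κ α : Type*} [Fintype ι] [Fintype κ] [LinearOrder α]

/-- The weighted counting process of the times `o k`: the total weight of those at most `t`. It is
`Xclock` with an arbitrary index type, signed weights and an arbitrary linear order of times. -/
def weightUpTo (w : ι → ℝ) (t : α) (o : ι → α) : ℝ :=
  ∑ k, if o k ≤ t then w k else 0

theorem weightUpTo_mul_left (c : ℝ) (w : ι → ℝ) (t : α) (o : ι → α) :
    weightUpTo (fun k => c * w k) t o = c * weightUpTo w t o := by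
  simp only [weightUpTo, Finset.mul_sum, mul_ite, mul_zero]

theorem weightUpTo_sumElim (v : ι → ℝ) (w : κ → ℝ) (t : α) (o : ι → α) (o' : κ → α) :
    weightUpTo (Sum.elim v w) t (Sum.elim o o') = weightUpTo v t o + weightUpTo w t o' :=
  Fintype.sum_sum_type _

theorem abs_weightUpTo_le (w : ι → ℝ) (t : α) (o : ι → α) : |weightUpTo w t o| ≤ ∑ k, |w k| :=
  (Finset.abs_sum_le_sum_abs _ _).trans <| Finset.sum_le_sum fun k _ => by split_ifs <;> simp

theorem weightUpTo_sign_mul (v : ι → ℝ) (t : α) (o : ι → α) (ε : ι → ℤˣ) :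
    weightUpTo (fun k => ((ε k : ℤ) : ℝ) * v k) t o
      = rademacherSum v {k | o k ≤ t} ε :=
  (Finset.sum_filter _ _).symm

theorem weightUpTo_eq_zero_or_exists_eq (w : ι → ℝ) {t m : α} (htm : t ≤ m) (o : ι → α) :
    weightUpTo w t o = 0 ∨ ∃ i, weightUpTo w t o = weightUpTo w (min (o i) m) o := by
  rcases (Finset.univ.filter fun i => o i ≤ t).eq_empty_or_nonempty with hempty | hne
  · refine .inl (Finset.sum_eq_zero fun k _ => if_neg fun hk => ?_)
    exact Finset.filter_eq_empty_iff.1 hempty (Finset.mem_univ k) hk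
  · obtain ⟨i, hi, hmax⟩ := Finset.exists_max_image _ o hne
    simp only [Finset.mem_filter, Finset.mem_univ, true_and] at hi hmax
    refine .inr ⟨i, Finset.sum_congr rfl fun k _ => if_congr ⟨fun hk => ?_, fun hk => ?_⟩ rfl rfl⟩
    · exact le_min (hmax k hk) (hk.trans htm)
    · exact (hk.trans (min_le_left _ _)).trans hi

/-- The exponential `sup_{t ≤ m} exp X(t)` of the running supremum of the process
`X(t) = weightUpTo w t o`. -/
noncomputable def expSup (w : ι → ℝ) (m : α) (o : ι → α) : ℝ≥0∞ :=
  ⨆ t ≤ m, ENNReal.ofReal (Real.exp (weightUpTo w t o))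

theorem ofReal_exp_weightUpTo_le_expSup (w : ι → ℝ) {t m : α} (htm : t ≤ m) (o : ι → α) :
    ENNReal.ofReal (Real.exp (weightUpTo w t o)) ≤ expSup w m o :=
  le_iSup₂ (f := fun t (_ : t ≤ m) => ENNReal.ofReal (Real.exp (weightUpTo w t o))) t htm

theorem expSup_eq_one_sup_iSup [NoMinOrder α] (w : ι → ℝ) (m : α) (o : ι → α) :
    expSup w m o = 1 ⊔ ⨆ i, ENNReal.ofReal (Real.exp (weightUpTo w (min (o i) m) o)) := by
  refine le_antisymm (iSup₂_le fun t ht => ?_) (sup_le ?_ (iSup_le fun i => ?_))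
  · rcases weightUpTo_eq_zero_or_exists_eq w ht o with h | ⟨i, h⟩
    · simp [h]
    · rw [h]
      exact le_sup_of_le_right (le_iSup_of_le i le_rfl)
  · have : Nonempty α := ⟨m⟩
    obtain ⟨b, hb⟩ := ((Set.finite_range o).insert m).bddBelow
    obtain ⟨t, htb⟩ := exists_lt b
    have hzero : weightUpTo w t o = 0 := Finset.sum_eq_zero fun k _ =>
      if_neg (htb.trans_le (hb (Set.mem_insert_of_mem _ ⟨k, rfl⟩))).not_ge
    have htm : t ≤ m := htb.le.trans (hb (Set.mem_insert _ _))
    simpa [hzero] using ofReal_exp_weightUpTo_le_expSup w htm o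
  · exact ofReal_exp_weightUpTo_le_expSup w (min_le_right _ _) o

theorem two_mul_expSup_sumElim_le (v : ι → ℝ) (w : κ → ℝ) (m : α) (o : ι → α) (o' : κ → α) :
    2 * expSup (Sum.elim v w) m (Sum.elim o o')
      ≤ expSup (fun k => 2 * v k) m o + expSup (fun k => 2 * w k) m o' := by
  simp only [expSup, ENNReal.mul_iSup]
  refine iSup₂_le fun t ht => ?_
  have hAMGM (a b : ℝ) : 2 * Real.exp (a + b) ≤ Real.exp (2 * a) + Real.exp (2 * b) := by
    rw [Real.exp_add, two_mul a, two_mul b, Real.exp_add, Real.exp_add]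
    linarith [sq_nonneg (Real.exp a - Real.exp b)]
  calc 2 * ENNReal.ofReal (Real.exp (weightUpTo (Sum.elim v w) t (Sum.elim o o')))
      ≤ ENNReal.ofReal (Real.exp (weightUpTo (fun k => 2 * v k) t o))
        + ENNReal.ofReal (Real.exp (weightUpTo (fun k => 2 * w k) t o')) := by
        rw [weightUpTo_sumElim, weightUpTo_mul_left, weightUpTo_mul_left,
          ← ENNReal.ofReal_add (Real.exp_pos _).le (Real.exp_pos _).le, ← ENNReal.ofReal_ofNat,
          ← ENNReal.ofReal_mul zero_le_two]
        exact ENNReal.ofReal_le_ofReal (hAMGM _ _)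
    _ ≤ _ := add_le_add (ofReal_exp_weightUpTo_le_expSup _ ht o)
        (ofReal_exp_weightUpTo_le_expSup _ ht o')

/-- The moment generating function `E_ε exp (∑_{o k ≤ m} ε_k v_k)` of a Rademacher sum over the
indices `k` with `o k ≤ m`. -/
noncomputable def rademacherMGF (v : ι → ℝ) (m : α) (o : ι → α) : ℝ :=
  ∏ k, Real.cosh (if o k ≤ m then v k else 0)

theorem rademacherMGF_pos (v : ι → ℝ) (m : α) (o : ι → α) : 0 < rademacherMGF v m o :=
  Finset.prod_pos fun _ _ => Real.cosh_pos _

theorem rademacherMGF_neg (v : ι → ℝ) (m : α) (o : ι → α) :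
    rademacherMGF (fun k => -v k) m o = rademacherMGF v m o := by
  simp only [rademacherMGF, apply_ite Real.cosh, Real.cosh_neg]

theorem rademacherMGF_le_prod_cosh (v : ι → ℝ) (m : α) (o : ι → α) :
    rademacherMGF v m o ≤ ∏ k, Real.cosh (v k) :=
  Finset.prod_le_prod (fun _ _ => (Real.cosh_pos _).le) fun k _ => by
    split_ifs <;> simp [Real.one_le_cosh]

theorem sum_exp_weightUpTo_sign_mul (v : ι → ℝ) (m : α) (o : ι → α) :
    ∑ ε : ι → ℤˣ, Real.exp (weightUpTo (fun k => ((ε k : ℤ) : ℝ) * v k) m o)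
      = 2 ^ Fintype.card ι * rademacherMGF v m o := by
  simp only [weightUpTo_sign_mul, sum_exp_rademacherSum, rademacherMGF, Finset.prod_filter,
    apply_ite Real.cosh, Real.cosh_zero]

theorem sum_expSup_sign_mul_le (v : ι → ℝ) (m : α) (o : ι → α) :
    ∑ ε : ι → ℤˣ, expSup (fun k => ((ε k : ℤ) : ℝ) * v k) m o
      ≤ 2 ^ Fintype.card ι * (4 * ENNReal.ofReal (rademacherMGF v m o)) := by
  obtain ⟨M, hM, hsum⟩ := exists_majorant_sum_sq_le o (fun k => v k / 2) {k | o k ≤ m}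
  have hhalf (ε : ι → ℤˣ) (t : α) : Real.exp (weightUpTo (fun k => ((ε k : ℤ) : ℝ) * v k) t o)
      = Real.exp (rademacherSum (fun k => v k / 2) {k | o k ≤ t} ε) ^ 2 := by
    rw [weightUpTo_sign_mul, ← Real.exp_nat_mul, rademacherSum, rademacherSum, Finset.mul_sum]
    congr 1
    exact Finset.sum_congr rfl fun k _ => by push_cast; ring
  have hsup (ε : ι → ℤˣ) :
      expSup (fun k => ((ε k : ℤ) : ℝ) * v k) m o ≤ ENNReal.ofReal (M ε ^ 2) := by
    refine iSup₂_le fun t ht => ENNReal.ofReal_le_ofReal ?_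
    have hfilter : ({k | o k ≤ m} : Finset ι).filter (fun k => o k ≤ t)
        = ({k | o k ≤ t} : Finset ι) := by
      rw [Finset.filter_filter]
      exact Finset.filter_congr fun k _ => and_iff_right_of_imp fun hk => hk.trans ht
    rw [hhalf, ← hfilter]
    exact pow_le_pow_left₀ (Real.exp_pos _).le (hM ε t) 2
  calc ∑ ε : ι → ℤˣ, expSup (fun k => ((ε k : ℤ) : ℝ) * v k) m o
      ≤ ∑ ε, ENNReal.ofReal (M ε ^ 2) := Finset.sum_le_sum fun ε _ => hsup ε
    _ = ENNReal.ofReal (∑ ε, M ε ^ 2) :=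
        (ENNReal.ofReal_sum_of_nonneg fun ε _ => sq_nonneg _).symm
    _ ≤ ENNReal.ofReal (2 ^ Fintype.card ι * (4 * rademacherMGF v m o)) := by
        refine ENNReal.ofReal_le_ofReal (hsum.trans_eq ?_)
        rw [mul_left_comm, ← sum_exp_weightUpTo_sign_mul]
        simp only [hhalf]
    _ = 2 ^ Fintype.card ι * (4 * ENNReal.ofReal (rademacherMGF v m o)) := by
        rw [ENNReal.ofReal_mul (by positivity), ENNReal.ofReal_mul zero_le_four,
          ENNReal.ofReal_pow zero_le_two, ENNReal.ofReal_ofNat, ENNReal.ofReal_ofNat]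

/-- The exponential supremum `sup_{t ≤ m} exp (X(t) - X'(t))` of the difference of the counting
processes of two families of times, read off a family of pairs. -/
noncomputable def pairExpSup (w : ι → ℝ) (m : α) (ω : ι → α × α) : ℝ≥0∞ :=
  expSup (Sum.elim w fun k => -w k) m (Sum.elim (fun k => (ω k).1) fun k => (ω k).2)

theorem sum_pairExpSup_sign_mul_le (w : ι → ℝ) (m : α) (ω : ι → α × α) :
    ∑ ε : ι → ℤˣ, pairExpSup (fun k => ((ε k : ℤ) : ℝ) * w k) m ω
      ≤ 2 ^ Fintype.card ι * (2 *
        (ENNReal.ofReal (rademacherMGF (fun k => 2 * w k) m fun k => (ω k).1)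
          + ENNReal.ofReal (rademacherMGF (fun k => 2 * w k) m fun k => (ω k).2))) := by
  rw [← ENNReal.mul_le_mul_iff_right two_ne_zero ENNReal.ofNat_ne_top, Finset.mul_sum]
  calc ∑ ε : ι → ℤˣ, 2 * pairExpSup (fun k => ((ε k : ℤ) : ℝ) * w k) m ω
      ≤ ∑ ε : ι → ℤˣ,
          (expSup (fun k => ((ε k : ℤ) : ℝ) * (2 * w k)) m (fun k => (ω k).1)
            + expSup (fun k => ((ε k : ℤ) : ℝ) * -(2 * w k)) m fun k => (ω k).2) :=
        Finset.sum_le_sum fun ε _ => by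
          simpa only [pairExpSup, mul_neg, mul_left_comm] using
            two_mul_expSup_sumElim_le (fun k => ((ε k : ℤ) : ℝ) * w k)
              (fun k => -(((ε k : ℤ) : ℝ) * w k)) m (fun k => (ω k).1) fun k => (ω k).2
    _ ≤ 2 ^ Fintype.card ι
            * (4 * ENNReal.ofReal (rademacherMGF (fun k => 2 * w k) m fun k => (ω k).1))
          + 2 ^ Fintype.card ι
            * (4 * ENNReal.ofReal (rademacherMGF (fun k => 2 * w k) m fun k => (ω k).2)) := by
        rw [Finset.sum_add_distrib, ← rademacherMGF_neg _ m fun k => (ω k).2]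
        exact add_le_add (sum_expSup_sign_mul_le _ _ _) (sum_expSup_sign_mul_le _ _ _)
    _ = _ := by ring

/-- Exchange the two entries of the pairs carrying the sign `-1`. -/
def exchange (ε : ι → ℤˣ) (ω : ι → α × α) : ι → α × α :=
  fun k => if ε k = 1 then ω k else (ω k).swap

theorem pairExpSup_exchange (w : ι → ℝ) (m : α) (ε : ι → ℤˣ) (ω : ι → α × α) :
    pairExpSup w m (exchange ε ω) = pairExpSup (fun k => ((ε k : ℤ) : ℝ) * w k) m ω := by
  simp only [pairExpSup, expSup, weightUpTo_sumElim]
  refine iSup_congr fun t => iSup_congr fun _ => ?_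
  simp only [weightUpTo, ← Finset.sum_add_distrib]
  congr 3 with k
  rcases Int.units_eq_one_or (ε k) with h | h
  · simp [exchange, h]
  · simp [exchange, h, add_comm]

end WeightUpTo

section Measurability

variable {ι α : Type*} [Fintype ι] [LinearOrder α] [TopologicalSpace α] [OrderClosedTopology α]
  [MeasurableSpace α] [OpensMeasurableSpace α]

theorem measurable_rademacherMGF (v : ι → ℝ) (m : α) : Measurable (rademacherMGF v m) :=
  Finset.measurable_prod _ fun k _ => Measurable.cosh <| Measurable.ite
    (measurableSet_Iic.preimage (measurable_pi_apply k)) measurable_const measurable_const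

theorem integrable_rademacherMGF (P : Measure (ι → α)) [IsFiniteMeasure P] (v : ι → ℝ) (m : α) :
    Integrable (rademacherMGF v m) P :=
  .of_bound (measurable_rademacherMGF v m).aestronglyMeasurable (∏ k, Real.cosh (v k))
    (.of_forall fun o => by
      rw [Real.norm_of_nonneg (rademacherMGF_pos v m o).le]
      exact rademacherMGF_le_prod_cosh v m o)

variable [SecondCountableTopology α]

theorem measurable_weightUpTo {Ω : Type*} [MeasurableSpace Ω] (w : ι → ℝ) {t : Ω → α}
    {o : Ω → ι → α} (ht : Measurable t) (ho : Measurable o) :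
    Measurable fun a => weightUpTo w (t a) (o a) :=
  Finset.measurable_sum _ fun k _ => Measurable.ite
    (measurableSet_le ((measurable_pi_apply k).comp ho) ht) measurable_const measurable_const

theorem integrable_weightUpTo (P : Measure (ι → α)) [IsFiniteMeasure P] (w : ι → ℝ) (t : α) :
    Integrable (weightUpTo w t) P :=
  .of_bound (measurable_weightUpTo w measurable_const measurable_id).aestronglyMeasurable
    (∑ k, |w k|) (.of_forall (abs_weightUpTo_le w t))

theorem measurable_expSup [NoMinOrder α] (w : ι → ℝ) (m : α) : Measurable (expSup w m) := by
  have hexpSup : expSup w m = fun o => 1 ⊔ ⨆ i,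
      ENNReal.ofReal (Real.exp (weightUpTo w (min (o i) m) o)) :=
    funext (expSup_eq_one_sup_iSup w m)
  rw [hexpSup]
  refine measurable_const.max (.iSup fun i => ENNReal.measurable_ofReal.comp (Measurable.exp ?_))
  exact measurable_weightUpTo w ((measurable_pi_apply i).min measurable_const) measurable_id

theorem measurable_pairExpSup [NoMinOrder α] (w : ι → ℝ) (m : α) :
    Measurable (pairExpSup w m) := by
  refine (measurable_expSup _ m).comp (measurable_pi_lambda _ fun i => ?_)
  rcases i with k | k
  · exact (measurable_pi_apply k).fst
  · exact (measurable_pi_apply k).snd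

theorem measurable_pairExpSup_prod [NoMinOrder α] (w : ι → ℝ) (m : α) :
    Measurable fun p : (ι → α) × (ι → α) => pairExpSup w m fun k => (p.1 k, p.2 k) :=
  (measurable_pairExpSup w m).comp <| measurable_pi_lambda _ fun k => by fun_prop

end Measurability

section Symmetrization

theorem ofReal_exp_integral_le_lintegral {Ω : Type*} [MeasurableSpace Ω] {P : Measure Ω}
    [IsProbabilityMeasure P] {f : Ω → ℝ} (hf : Integrable f P) :
    ENNReal.ofReal (Real.exp (∫ x, f x ∂P)) ≤ ∫⁻ x, ENNReal.ofReal (Real.exp (f x)) ∂P := by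
  have hnonneg : 0 ≤ᵐ[P] fun x => Real.exp (f x) := .of_forall fun x => (Real.exp_pos _).le
  by_cases hexp : Integrable (fun x => Real.exp (f x)) P
  · rw [← ofReal_integral_eq_lintegral_ofReal hexp hnonneg]
    exact ENNReal.ofReal_le_ofReal <| convexOn_exp.map_integral_le
      Real.continuous_exp.continuousOn isClosed_univ (.of_forall fun _ => Set.mem_univ _) hf hexp
  · have hmeas := Real.continuous_exp.comp_aestronglyMeasurable hf.aestronglyMeasurable
    have htop : ¬∫⁻ x, ENNReal.ofReal (Real.exp (f x)) ∂P < ∞ := fun h =>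
      hexp ⟨hmeas, (hasFiniteIntegral_iff_ofReal hnonneg).2 h⟩
    simp [not_lt_top_iff.1 htop]

theorem measurePreserving_exchange {ι α : Type*} [Fintype ι] [MeasurableSpace α]
    (ν : ι → Measure α) [∀ k, SigmaFinite (ν k)] (ε : ι → ℤˣ) :
    MeasurePreserving (exchange ε) (Measure.pi fun k => (ν k).prod (ν k))
      (Measure.pi fun k => (ν k).prod (ν k)) := by
  refine measurePreserving_pi (fun k => (ν k).prod (ν k)) (fun k => (ν k).prod (ν k))
    (f := fun k p => if ε k = 1 then p else p.swap) fun k => ?_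
  split_ifs
  · exact .id _
  · exact Measure.measurePreserving_swap

variable {ι α : Type*} [Fintype ι] [LinearOrder α] [TopologicalSpace α] [OrderClosedTopology α]
  [SecondCountableTopology α] [MeasurableSpace α] [OpensMeasurableSpace α]
  (ν : ι → Measure α) [∀ k, IsProbabilityMeasure (ν k)]

theorem lintegral_pairExpSup_le [NoMinOrder α] (w : ι → ℝ) (m : α) :
    ∫⁻ ω, pairExpSup w m ω ∂Measure.pi (fun k => (ν k).prod (ν k))
      ≤ 4 * ∫⁻ o, ENNReal.ofReal (rademacherMGF (fun k => 2 * w k) m o) ∂Measure.pi ν := by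
  set Q := Measure.pi fun k => (ν k).prod (ν k)
  have hfst : MeasurePreserving (fun (ω : ι → α × α) k => (ω k).1) Q (Measure.pi ν) :=
    measurePreserving_pi _ _ fun _ => measurePreserving_fst
  have hsnd : MeasurePreserving (fun (ω : ι → α × α) k => (ω k).2) Q (Measure.pi ν) :=
    measurePreserving_pi _ _ fun _ => measurePreserving_snd
  have hmgf : Measurable fun o : ι → α =>
      ENNReal.ofReal (rademacherMGF (fun k => 2 * w k) m o) :=
    (measurable_rademacherMGF _ m).ennreal_ofReal
  have hmgf_fst : Measurable fun ω : ι → α × α =>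
      ENNReal.ofReal (rademacherMGF (fun k => 2 * w k) m fun k => (ω k).1) :=
    hmgf.comp hfst.measurable
  have hexchange (ε : ι → ℤˣ) :
      ∫⁻ ω, pairExpSup (fun k => ((ε k : ℤ) : ℝ) * w k) m ω ∂Q = ∫⁻ ω, pairExpSup w m ω ∂Q := by
    simp only [← pairExpSup_exchange]
    exact (measurePreserving_exchange ν ε).lintegral_comp (measurable_pairExpSup w m)
  rw [← ENNReal.mul_le_mul_iff_right (a := 2 ^ Fintype.card ι) (by simp) (by simp)]
  calc 2 ^ Fintype.card ι * ∫⁻ ω, pairExpSup w m ω ∂Q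
      = ∫⁻ ω, ∑ ε : ι → ℤˣ, pairExpSup (fun k => ((ε k : ℤ) : ℝ) * w k) m ω ∂Q := by
        rw [lintegral_finsetSum _ fun ε _ => measurable_pairExpSup _ m]
        simp [hexchange]
    _ ≤ ∫⁻ ω, 2 ^ Fintype.card ι * (2 *
          (ENNReal.ofReal (rademacherMGF (fun k => 2 * w k) m fun k => (ω k).1)
            + ENNReal.ofReal (rademacherMGF (fun k => 2 * w k) m fun k => (ω k).2))) ∂Q :=
        lintegral_mono fun ω => sum_pairExpSup_sign_mul_le w m ω
    _ = 2 ^ Fintype.card ι *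
          (4 * ∫⁻ o, ENNReal.ofReal (rademacherMGF (fun k => 2 * w k) m o) ∂Measure.pi ν) := by
        rw [lintegral_const_mul' _ _ (by simp), lintegral_const_mul' _ _ (by simp),
          lintegral_add_left hmgf_fst, hfst.lintegral_comp hmgf,
          hsnd.lintegral_comp hmgf]
        ring

theorem ofReal_exp_weightUpTo_sub_integral_le (P : Measure (ι → α)) [IsProbabilityMeasure P]
    (w : ι → ℝ) {t m : α} (htm : t ≤ m) (o : ι → α) :
    ENNReal.ofReal (Real.exp (weightUpTo w t o - ∫ o', weightUpTo w t o' ∂P))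
      ≤ ∫⁻ o', pairExpSup w m (fun k => (o k, o' k)) ∂P := by
  have hint := integrable_weightUpTo P w t
  calc ENNReal.ofReal (Real.exp (weightUpTo w t o - ∫ o', weightUpTo w t o' ∂P))
      = ENNReal.ofReal (Real.exp (∫ o', (weightUpTo w t o - weightUpTo w t o') ∂P)) := by
        rw [integral_sub (integrable_const _) hint, integral_const, probReal_univ, one_smul]
    _ ≤ ∫⁻ o', ENNReal.ofReal (Real.exp (weightUpTo w t o - weightUpTo w t o')) ∂P :=
        ofReal_exp_integral_le_lintegral ((integrable_const _).sub hint)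
    _ ≤ ∫⁻ o', pairExpSup w m (fun k => (o k, o' k)) ∂P := lintegral_mono fun o' => by
        have hneg : weightUpTo (fun k => -w k) t o' = -weightUpTo w t o' := by
          simpa using weightUpTo_mul_left (-1) w t o'
        rw [sub_eq_add_neg, ← hneg, ← weightUpTo_sumElim]
        exact ofReal_exp_weightUpTo_le_expSup _ htm _

theorem lintegral_lintegral_pairExpSup [NoMinOrder α] (w : ι → ℝ) (m : α) :
    ∫⁻ o, ∫⁻ o', pairExpSup w m (fun k => (o k, o' k)) ∂Measure.pi ν ∂Measure.pi ν
      = ∫⁻ ω, pairExpSup w m ω ∂Measure.pi fun k => (ν k).prod (ν k) := by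
  have hpair := (measurePreserving_arrowProdEquivProdArrow α α ι ν ν).symm
  exact (lintegral_prod _ (measurable_pairExpSup_prod w m).aemeasurable).symm.trans
    (hpair.lintegral_comp (measurable_pairExpSup w m))

theorem ofReal_exp_mul_measure_exists_le_weightUpTo_sub_integral_le [NoMinOrder α] (w : ι → ℝ)
    (m : α) (y : ℝ) :
    ENNReal.ofReal (Real.exp y) * Measure.pi ν
        {o | ∃ t ≤ m, y ≤ weightUpTo w t o - ∫ o', weightUpTo w t o' ∂Measure.pi ν}
      ≤ 4 * ∫⁻ o, ENNReal.ofReal (rademacherMGF (fun k => 2 * w k) m o) ∂Measure.pi ν := by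
  have hmeas : Measurable fun o : ι → α =>
      ∫⁻ o', pairExpSup w m (fun k => (o k, o' k)) ∂Measure.pi ν :=
    (measurable_pairExpSup_prod w m).lintegral_prod_right'
  calc ENNReal.ofReal (Real.exp y) * Measure.pi ν
        {o | ∃ t ≤ m, y ≤ weightUpTo w t o - ∫ o', weightUpTo w t o' ∂Measure.pi ν}
      ≤ ENNReal.ofReal (Real.exp y) * Measure.pi ν {o | ENNReal.ofReal (Real.exp y)
          ≤ ∫⁻ o', pairExpSup w m (fun k => (o k, o' k)) ∂Measure.pi ν} := by
        refine mul_le_mul_right (measure_mono ?_) _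
        rintro o ⟨t, htm, hy⟩
        exact (ENNReal.ofReal_le_ofReal (Real.exp_le_exp.2 hy)).trans
          (ofReal_exp_weightUpTo_sub_integral_le _ w htm o)
    _ ≤ ∫⁻ o, ∫⁻ o', pairExpSup w m (fun k => (o k, o' k)) ∂Measure.pi ν ∂Measure.pi ν :=
        mul_meas_ge_le_lintegral hmeas _
    _ = ∫⁻ ω, pairExpSup w m ω ∂Measure.pi fun k => (ν k).prod (ν k) :=
        lintegral_lintegral_pairExpSup ν w m
    _ ≤ _ := lintegral_pairExpSup_le ν w m

end Symmetrization

section Bernstein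

theorem cosh_sub_one_le_sq {c : ℝ} (hc : |c| ≤ 1) : Real.cosh c - 1 ≤ c ^ 2 := by
  have hsq : |c ^ 2 / 2| = c ^ 2 / 2 := abs_of_nonneg (by positivity)
  have hc2 : c ^ 2 ≤ 1 := (sq_le_one_iff_abs_le_one c).2 hc
  calc Real.cosh c - 1 ≤ Real.exp (c ^ 2 / 2) - 1 := sub_le_sub_right (Real.cosh_le_exp_half_sq c) 1
    _ ≤ |Real.exp (c ^ 2 / 2) - 1| := le_abs_self _
    _ ≤ 2 * |c ^ 2 / 2| := Real.abs_exp_sub_one_le (by rw [hsq]; linarith)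
    _ = c ^ 2 := by rw [hsq]; ring

variable {ι α : Type*} [Fintype ι] [LinearOrder α] [TopologicalSpace α] [OrderClosedTopology α]
  [MeasurableSpace α] [OpensMeasurableSpace α]

theorem integral_cosh_ite_le (ν : Measure α) [IsProbabilityMeasure ν] (m : α) {c : ℝ}
    (hc : |c| ≤ 1) :
    ∫ x, Real.cosh (if x ≤ m then c else 0) ∂ν ≤ Real.exp (ν.real (Set.Iic m) * c ^ 2) := by
  have hcosh (x : α) : Real.cosh (if x ≤ m then c else 0)
      = 1 + (Set.Iic m).indicator (fun _ => Real.cosh c - 1) x := by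
    by_cases h : x ≤ m <;> simp [h]
  calc ∫ x, Real.cosh (if x ≤ m then c else 0) ∂ν
      = 1 + ν.real (Set.Iic m) * (Real.cosh c - 1) := by
        simp only [hcosh]
        rw [integral_add (integrable_const _)
          ((integrable_const _).indicator measurableSet_Iic),
          integral_indicator_const _ measurableSet_Iic]
        simp
    _ ≤ 1 + ν.real (Set.Iic m) * c ^ 2 := by
        gcongr
        exact cosh_sub_one_le_sq hc
    _ ≤ Real.exp (ν.real (Set.Iic m) * c ^ 2) := by
        rw [add_comm]
        exact Real.add_one_le_exp _

variable (ν : ι → Measure α) [∀ k, IsProbabilityMeasure (ν k)]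

theorem lintegral_rademacherMGF_le {v : ι → ℝ} (hv : ∀ k, |v k| ≤ 1) (m : α) :
    ∫⁻ o, ENNReal.ofReal (rademacherMGF v m o) ∂Measure.pi ν
      ≤ ENNReal.ofReal (Real.exp (∑ k, (ν k).real (Set.Iic m) * v k ^ 2)) := by
  rw [← ofReal_integral_eq_lintegral_ofReal (integrable_rademacherMGF _ v m)
    (.of_forall fun o => (rademacherMGF_pos v m o).le), Real.exp_sum]
  refine ENNReal.ofReal_le_ofReal ?_
  simp only [rademacherMGF]
  rw [integral_fintype_prod_eq_prod fun k x => Real.cosh (if x ≤ m then v k else 0)]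
  exact Finset.prod_le_prod (fun k _ => integral_nonneg fun x => (Real.cosh_pos _).le)
    fun k _ => integral_cosh_ite_le (ν k) m (hv k)

variable [SecondCountableTopology α] [NoMinOrder α]

theorem measure_exists_le_weightUpTo_sub_integral_le_exp {w : ι → ℝ} (hw : ∀ k, |2 * w k| ≤ 1)
    (m : α) (y : ℝ) :
    Measure.pi ν {o | ∃ t ≤ m, y ≤ weightUpTo w t o - ∫ o', weightUpTo w t o' ∂Measure.pi ν}
      ≤ ENNReal.ofReal
          (4 * Real.exp (∑ k, (ν k).real (Set.Iic m) * (2 * w k) ^ 2 - y)) := by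
  have hexp : ENNReal.ofReal (Real.exp y) ≠ 0 := by simp [Real.exp_pos]
  refine (ENNReal.mul_le_mul_iff_right hexp ENNReal.ofReal_ne_top).1 ?_
  calc _ ≤ 4 * ∫⁻ o, ENNReal.ofReal (rademacherMGF (fun k => 2 * w k) m o) ∂Measure.pi ν :=
        ofReal_exp_mul_measure_exists_le_weightUpTo_sub_integral_le ν w m y
    _ ≤ 4 * ENNReal.ofReal (Real.exp (∑ k, (ν k).real (Set.Iic m) * (2 * w k) ^ 2)) := by
        gcongr
        exact lintegral_rademacherMGF_le ν hw m
    _ = _ := by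
        rw [← ENNReal.ofReal_ofNat, ← ENNReal.ofReal_mul zero_le_four,
          ← ENNReal.ofReal_mul (Real.exp_pos _).le, mul_left_comm, ← Real.exp_add,
          add_sub_cancel]

theorem measure_exists_le_weightUpTo_sub_integral_le_bernstein {w : ι → ℝ} {m : α} {b V y : ℝ}
    (hb : 0 < b) (hw : ∀ k, |w k| ≤ b) (hV : ∑ k, (ν k).real (Set.Iic m) * w k ^ 2 ≤ V)
    (hy : 0 < y) :
    Measure.pi ν {o | ∃ t ≤ m, y ≤ weightUpTo w t o - ∫ o', weightUpTo w t o' ∂Measure.pi ν}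
      ≤ ENNReal.ofReal (4 * Real.exp (-y ^ 2 / (4 * (b * y + 4 * V)))) := by
  have hV0 : 0 ≤ V := (Finset.sum_nonneg fun k _ => by positivity).trans hV
  set D := b * y + 4 * V
  have hDpos : 0 < D := by positivity
  -- `θ` minimises `θ ^ 2 * D - θ * y`; the term `b * y` of `D` ensures `2 * θ * b ≤ 1`.
  set θ := y / (2 * D) with hθ
  have hθpos : 0 < θ := by positivity
  have hθw (k : ι) : |2 * (θ * w k)| ≤ 1 := by
    calc |2 * (θ * w k)| = 2 * θ * |w k| := by
          rw [← mul_assoc, abs_mul, abs_of_pos (by positivity)]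
      _ ≤ 2 * θ * b := by gcongr; exact hw k
      _ = b * y / D := by rw [hθ]; field_simp
      _ ≤ 1 := (div_le_one hDpos).2 (by linarith)
  have hexponent : ∑ k, (ν k).real (Set.Iic m) * (2 * (θ * w k)) ^ 2 - θ * y
      ≤ -y ^ 2 / (4 * D) := by
    calc _ = θ ^ 2 * (4 * ∑ k, (ν k).real (Set.Iic m) * w k ^ 2) - θ * y := by
          rw [Finset.mul_sum, Finset.mul_sum]
          congr 1
          exact Finset.sum_congr rfl fun k _ => by ring
      _ ≤ θ ^ 2 * D - θ * y := by
          gcongr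
          linarith [mul_pos hb hy]
      _ = -y ^ 2 / (4 * D) := by rw [hθ]; field_simp; ring
  have hrescale : {o : ι → α | ∃ t ≤ m,
        y ≤ weightUpTo w t o - ∫ o', weightUpTo w t o' ∂Measure.pi ν}
      = {o | ∃ t ≤ m, θ * y ≤ weightUpTo (fun k => θ * w k) t o
        - ∫ o', weightUpTo (fun k => θ * w k) t o' ∂Measure.pi ν} := by
    simp only [weightUpTo_mul_left, integral_const_mul, ← mul_sub, mul_le_mul_iff_right₀ hθpos]
  rw [hrescale]
  refine (measure_exists_le_weightUpTo_sub_integral_le_exp ν hθw m (θ * y)).trans ?_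
  gcongr

end Bernstein

section Clocks

theorem expMeasure_real_Iic_le {r m : ℝ} (hr : 0 < r) (hm : 0 ≤ m) :
    (ProbabilityTheory.expMeasure r).real (Set.Iic m) ≤ r * m := by
  have := ProbabilityTheory.isProbabilityMeasure_expMeasure hr
  rw [← ProbabilityTheory.cdf_eq_real, ProbabilityTheory.cdf_expMeasure_eq hr, if_pos hm]
  linarith [Real.add_one_le_exp (-(r * m))]

theorem sum_expMeasure_real_Iic_mul_sq_le {ι : Type*} [Fintype ι] {w : ι → ℝ}
    (hw : ∀ k, 0 < w k) {C m : ℝ} (hC : 0 ≤ C) (hm : 0 ≤ m)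
    (hcube : ∑ k, w k ^ 3 ≤ C * ∑ k, w k) :
    ∑ k, (ProbabilityTheory.expMeasure (w k / ∑ i, w i)).real (Set.Iic m) * w k ^ 2
      ≤ C * m := by
  have hsum : 0 ≤ ∑ i, w i := Finset.sum_nonneg fun i _ => (hw i).le
  calc ∑ k, (ProbabilityTheory.expMeasure (w k / ∑ i, w i)).real (Set.Iic m) * w k ^ 2
      ≤ ∑ k, w k / (∑ i, w i) * m * w k ^ 2 := by
        gcongr with k
        exact expMeasure_real_Iic_le
          (div_pos (hw k) (Finset.sum_pos (fun i _ => hw i) ⟨k, Finset.mem_univ k⟩)) hm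
    _ = (∑ k, w k ^ 3) / (∑ i, w i) * m := by
        rw [Finset.sum_div, Finset.sum_mul]
        exact Finset.sum_congr rfl fun k _ => by ring
    _ ≤ C * m := by
        gcongr
        exact div_le_of_le_mul₀ hsum hC hcube

theorem clocksMeasure_exists_le_Xclock_sub_integral_le {n : ℕ} {w : Fin n → ℝ}
    (hw : ∀ k, 0 < w k) {b C m y : ℝ} (hb : 0 < b) (hwb : ∀ k, w k ≤ b) (hC : 0 ≤ C)
    (hcube : ∑ k, w k ^ 3 ≤ C * ∑ k, w k) (hm : 0 ≤ m) (hy : 0 < y) :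
    clocksMeasure n w
        {ω | ∃ t ≤ m, y ≤ Xclock w t ω - ∫ ω', Xclock w t ω' ∂clocksMeasure n w}
      ≤ ENNReal.ofReal (4 * Real.exp (-y ^ 2 / (4 * (b * y + 4 * (C * m))))) := by
  have hprob (k : Fin n) :
      IsProbabilityMeasure (ProbabilityTheory.expMeasure (w k / ∑ i, w i)) :=
    ProbabilityTheory.isProbabilityMeasure_expMeasure <|
      div_pos (hw k) (Finset.sum_pos (fun i _ => hw i) ⟨k, Finset.mem_univ k⟩)
  exact measure_exists_le_weightUpTo_sub_integral_le_bernstein _ hb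
    (fun k => (abs_of_pos (hw k)).trans_le (hwb k))
    (sum_expMeasure_real_Iic_mul_sq_le hw hC hm hcube) hy

end Clocks

section ConditionsC

variable {w : ∀ n : ℕ, Fin n → ℝ} {μ : Measure ℝ}

theorem CondC.integrable_id (hC : CondC w μ) : Integrable (fun x : ℝ => x) μ := by
  have := hC.isProb
  refine ((integrable_const (1 : ℝ)).add hC.int3).mono' aestronglyMeasurable_id ?_
  filter_upwards [hC.pos] with x hx
  rw [Real.norm_of_nonneg hx.le, Pi.add_apply]
  nlinarith [mul_nonneg hx.le (sq_nonneg (x - 1)), sq_nonneg (x - 1)]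

theorem CondC.integral_id_pos (hC : CondC w μ) : 0 < ∫ x, x ∂μ := by
  have := hC.isProb
  rw [integral_pos_iff_support_of_nonneg_ae (hC.pos.mono fun _ => le_of_lt) hC.integrable_id]
  have hsupport : Function.support (fun x : ℝ => x) =ᵐ[μ] Set.univ :=
    eventuallyEq_univ.2 (hC.pos.mono fun _ => ne_of_gt)
  rw [measure_congr hsupport, measure_univ]
  exact one_pos

theorem CondC.isBigO_natCast_ell (hC : CondC w μ) :
    (fun n : ℕ => (n : ℝ)) =O[atTop] ell w := by
  have hpow : (fun n : ℕ => (n : ℝ) ^ ((2 : ℝ) / 3)) =O[atTop] fun n : ℕ => (n : ℝ) :=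
    .of_bound' <| (eventually_ge_atTop 1).mono fun n hn => by
      have hn' : (1 : ℝ) ≤ n := by exact_mod_cast hn
      rw [Real.norm_of_nonneg (by positivity), Real.norm_of_nonneg (by positivity)]
      exact Real.rpow_le_self_of_one_le hn' (by norm_num)
  have hmean : (fun n : ℕ => (n : ℝ)) =O[atTop] fun n : ℕ => (∫ x, x ∂μ) * (n : ℝ) :=
    isBigO_self_const_mul hC.integral_id_pos.ne' _ _
  have hequiv : IsEquivalent atTop (ell w) fun n : ℕ => (∫ x, x ∂μ) * (n : ℝ) :=
    hC.ell_asymp.trans_isBigO (hpow.trans hmean)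
  exact hmean.trans hequiv.isBigO_symm

theorem CondC.isBigO_sum_cube_ell (hC : CondC w μ) :
    (fun n : ℕ => ∑ i, w n i ^ 3) =O[atTop] ell w := by
  have hone : (fun _ : ℕ => (1 : ℝ)) =O[atTop] fun n : ℕ => (n : ℝ) :=
    (isLittleO_const_id_atTop (1 : ℝ)).isBigO.comp_tendsto tendsto_natCast_atTop_atTop
  have hcube := (hC.cube_asymp.isBigO.trans hone).add
    (isBigO_const_mul_self (∫ x, x ^ 3 ∂μ) (fun n : ℕ => (n : ℝ)) atTop)
  simp only [sub_add_cancel] at hcube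
  exact hcube.trans hC.isBigO_natCast_ell

end ConditionsC

theorem clock_process_uniform_concentration_general (w : ∀ n : ℕ, Fin n → ℝ)
    (hw : ∀ n i, 0 < w n i) (hcube : (fun n : ℕ => ∑ i, w n i ^ 3) =O[atTop] ell w)
    (hmax : (fun n : ℕ => ⨆ i, w n i) =O[atTop] fun n : ℕ => (n : ℝ) ^ ((1 : ℝ) / 3)) :
    ∃ A > (0 : ℝ), ∀ᶠ n : ℕ in atTop, ∀ m y : ℝ, 0 ≤ m → 0 < y →
      clocksMeasure n (w n)
          {ω | ∃ t ≤ m, y ≤ Xclock (w n) t ω - ∫ ω', Xclock (w n) t ω' ∂clocksMeasure n (w n)}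
        ≤ ENNReal.ofReal
            (A * Real.exp (-y ^ 2 / (A * (y * (n : ℝ) ^ ((1 : ℝ) / 3) + m)))) := by
  obtain ⟨C, hC, hcube⟩ := hcube.exists_pos
  obtain ⟨B, hB, hmax⟩ := hmax.exists_pos
  refine ⟨4 + 4 * B + 16 * C, by positivity, ?_⟩
  filter_upwards [hcube.bound, hmax.bound, eventually_gt_atTop 0] with n hcube hmax hn m y hm hy
  have hroot : 0 < (n : ℝ) ^ ((1 : ℝ) / 3) := by positivity
  have hwb (k : Fin n) : w n k ≤ B * (n : ℝ) ^ ((1 : ℝ) / 3) := by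
    rw [Real.norm_of_nonneg hroot.le] at hmax
    exact (le_ciSup (Set.finite_range (w n)).bddAbove k).trans ((Real.le_norm_self _).trans hmax)
  have hcube' : ∑ k, w n k ^ 3 ≤ C * ∑ k, w n k := by
    rw [Real.norm_of_nonneg (r := ell w n) (Finset.sum_nonneg fun k _ => (hw n k).le)] at hcube
    exact (Real.le_norm_self _).trans hcube
  refine (clocksMeasure_exists_le_Xclock_sub_integral_le (hw n) (by positivity) hwb hC.le hcube'
    hm hy).trans (ENNReal.ofReal_le_ofReal ?_)
  rw [neg_div, neg_div]
  gcongr ?_ * Real.exp (-(y ^ 2 / ?_))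
  · linarith
  · nlinarith [mul_pos hy hroot, mul_nonneg hB.le hm, mul_pos hC (mul_pos hy hroot)]

/-- Lemma of the paper, chaining bound: uniform concentration of
`X(t) − E[X(t)]` for `0 ≤ t ≤ m`. -/
theorem clock_process_uniform_concentration
    (w : ∀ n : ℕ, Fin n → ℝ) (μ : Measure ℝ) (hC : CondC w μ) :
    ∃ Abar > (0 : ℝ), ∃ A > (0 : ℝ), ∀ m y : ℕ → ℝ, Cond2 w Abar m y →
      ∀ᶠ n : ℕ in atTop,
        clocksMeasure n (w n)
          {ω : Fin n → ℝ | ∃ t : ℝ, 0 ≤ t ∧ t ≤ m n ∧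
            y n ≤ Xclock (w n) t ω - ∫ ω', Xclock (w n) t ω' ∂clocksMeasure n (w n)}
        ≤ ENNReal.ofReal
            (A * Real.exp (-(y n) ^ 2 / (A * (y n * (n : ℝ) ^ ((1 : ℝ) / 3) + m n)))) := by
  obtain ⟨A, hA, hbound⟩ := clock_process_uniform_concentration_general w hC.w_pos
    hC.isBigO_sum_cube_ell hC.max_asymp.isBigO
  refine ⟨1, one_pos, A, hA, fun m y h2 => ?_⟩
  filter_upwards [hbound, h2.a_top.eventually_ge_atTop 0, h2.b_top.eventually_gt_atTop 0]
    with n hn hm hy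
  exact (measure_mono fun _ hω => hω.imp fun _ ht => ht.2).trans (hn _ _ hm hy)
end

section
/- Assume Conditions (C). There exists a constant A > 0 such that for any pair of sequences (m, y) verifying Conditions (C2): P( sup_{0 ≤ i ≤ j ≤ m} | Σ_{k=i}^{j} w_{v(k)} − E[Σ_{k=i}^{j} w_{v(k)}] | ≥ y ) ≤ A·exp(−y²/(A(y·n^{1/3} + m))). -/
open MeasureTheory Filter Asymptotics
open scoped Classical ENNReal Topology

/-! Revealing a size-biased order one pick at a time turns a partial sum of weights into a Doob
martingale. A coupling shows that removing `x` lowers the mean sum of `a` over the remaining draws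
by at most `a x` and raises it by at most `κ`, so `exp u ≤ 1 + u + u ^ 2` yields a Bernstein bound
for each single partial sum. To get all partial sums at once, subtract instead the conditional means
of the draws: Doob's maximal inequality gives the same bound for this martingale, and what remains
is the drift, the sum of the deviations of the conditional means from their expectations.

If `m ≤ K * n ^ (2 / 3)`, the drift is at most an average over `i ≤ m` of the deviations of partial
sums of rescaled weights and rescaled squared weights, to which the single-sum bound applies. If `m`
is larger, then `m ^ 2 = O(y * ℓ_n)` makes the exponent exceed any constant, so a union bound over a
grid of boundedly many partial sums is affordable; between two grid points the drift is controlled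
from one side only, which is enough because the deviations at both of them are small. -/

namespace SizeBiased

noncomputable section

section OnePick

variable {α : Type*} {w : α → ℝ} {R : Finset α} {f g : α → ℝ}

/-- The expectation of `f` at an element of `R` picked with probability proportional to `w`
(junk value `0` if `R` has total weight `0`). -/
def pickExp (w : α → ℝ) (R : Finset α) (f : α → ℝ) : ℝ :=
  (∑ x ∈ R, w x * f x) / ∑ x ∈ R, w x

lemma pickExp_add : pickExp w R (fun x => f x + g x) = pickExp w R f + pickExp w R g := by
  simp only [pickExp, mul_add, Finset.sum_add_distrib, add_div]

lemma pickExp_sub : pickExp w R (fun x => f x - g x) = pickExp w R f - pickExp w R g := by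
  simp only [pickExp, mul_sub, Finset.sum_sub_distrib, sub_div]

lemma pickExp_const_mul (c : ℝ) : pickExp w R (fun x => c * f x) = c * pickExp w R f := by
  simp only [pickExp, mul_left_comm _ c, ← Finset.mul_sum, mul_div_assoc]

lemma pickExp_sum {ι : Type*} (s : Finset ι) (f : ι → α → ℝ) :
    pickExp w R (fun x => ∑ i ∈ s, f i x) = ∑ i ∈ s, pickExp w R (f i) := by
  simp only [pickExp, Finset.mul_sum, ← Finset.sum_div]
  rw [Finset.sum_comm]

lemma pickExp_congr (h : ∀ x ∈ R, f x = g x) : pickExp w R f = pickExp w R g := by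
  rw [pickExp, Finset.sum_congr rfl fun x hx => by rw [h x hx], pickExp]

lemma pickExp_mono (hw : ∀ x, 0 ≤ w x) (h : ∀ x ∈ R, f x ≤ g x) :
    pickExp w R f ≤ pickExp w R g :=
  div_le_div_of_nonneg_right
    (Finset.sum_le_sum fun x hx => mul_le_mul_of_nonneg_left (h x hx) (hw x))
    (Finset.sum_nonneg fun x _ => hw x)

lemma pickExp_nonneg (hw : ∀ x, 0 ≤ w x) (hf : ∀ x, 0 ≤ f x) : 0 ≤ pickExp w R f :=
  div_nonneg (Finset.sum_nonneg fun x _ => mul_nonneg (hw x) (hf x))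
    (Finset.sum_nonneg fun x _ => hw x)

lemma pickExp_const (hw : ∀ x, 0 < w x) (hR : R.Nonempty) (c : ℝ) :
    pickExp w R (fun _ => c) = c := by
  rw [pickExp, ← Finset.sum_mul, mul_div_cancel_left₀ _ (Finset.sum_pos (fun x _ => hw x) hR).ne']

lemma pickExp_exp_le {d : α → ℝ} {θ v : ℝ} (hw : ∀ x, 0 < w x) (hR : R.Nonempty)
    (hmean : pickExp w R d = 0) (hsq : pickExp w R (fun x => d x ^ 2) ≤ v)
    (hθ : ∀ x ∈ R, |θ * d x| ≤ 1) :
    pickExp w R (fun x => Real.exp (θ * d x)) ≤ Real.exp (v * θ ^ 2) := by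
  have hexp : ∀ x ∈ R, Real.exp (θ * d x) ≤ 1 + (θ * d x + θ ^ 2 * d x ^ 2) := fun x hx => by
    have := (abs_le.1 (Real.abs_exp_sub_one_sub_id_le (hθ x hx))).2
    linarith [mul_pow θ (d x) 2]
  calc pickExp w R (fun x => Real.exp (θ * d x))
      ≤ pickExp w R fun x => 1 + (θ * d x + θ ^ 2 * d x ^ 2) :=
        pickExp_mono (fun x => (hw x).le) hexp
    _ = 1 + θ ^ 2 * pickExp w R fun x => d x ^ 2 := by
        rw [pickExp_add, pickExp_const hw hR, pickExp_add, pickExp_const_mul, hmean,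
          pickExp_const_mul, mul_zero, zero_add]
    _ ≤ v * θ ^ 2 + 1 := by rw [mul_comm v, add_comm]; gcongr
    _ ≤ Real.exp (v * θ ^ 2) := Real.add_one_le_exp _

end OnePick

section Draws

variable {α : Type*} [DecidableEq α] {w : α → ℝ} {k : ℕ} {R : Finset α} {f g : List α → ℝ}

/-- The expectation of `f` at the list of the first `k` elements of a size-biased order of `R`,
that is, of `k` successive picks without replacement. -/
def drawExp (w : α → ℝ) : ℕ → Finset α → (List α → ℝ) → ℝ
  | 0, _, f => f []
  | k + 1, R, f => pickExp w R fun x => drawExp w k (R.erase x) fun l => f (x :: l)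

lemma drawExp_succ : drawExp w (k + 1) R f =
    pickExp w R fun x => drawExp w k (R.erase x) fun l => f (x :: l) :=
  rfl

lemma drawExp_add : drawExp w k R (fun l => f l + g l) = drawExp w k R f + drawExp w k R g := by
  induction k generalizing R f g with
  | zero => rfl
  | succ k ih => simp only [drawExp_succ, ih, pickExp_add]

lemma drawExp_sub : drawExp w k R (fun l => f l - g l) = drawExp w k R f - drawExp w k R g := by
  induction k generalizing R f g with
  | zero => rfl
  | succ k ih => simp only [drawExp_succ, ih, pickExp_sub]

lemma drawExp_const_mul (c : ℝ) : drawExp w k R (fun l => c * f l) = c * drawExp w k R f := by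
  induction k generalizing R f with
  | zero => rfl
  | succ k ih => simp only [drawExp_succ, ih, pickExp_const_mul]

lemma drawExp_sum {ι : Type*} (s : Finset ι) (f : ι → List α → ℝ) :
    drawExp w k R (fun l => ∑ i ∈ s, f i l) = ∑ i ∈ s, drawExp w k R (f i) := by
  induction k generalizing R f with
  | zero => rfl
  | succ k ih => simp only [drawExp_succ, ih, pickExp_sum]

lemma drawExp_mono (hw : ∀ x, 0 ≤ w x)
    (h : ∀ l : List α, l.length = k → l.Nodup → l.toFinset ⊆ R → f l ≤ g l) :
    drawExp w k R f ≤ drawExp w k R g := by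
  induction k generalizing R f g with
  | zero => exact h [] rfl List.nodup_nil (by simp)
  | succ k ih =>
    refine pickExp_mono hw fun x hx => ih fun l hlen hl hlR => h _ (by simp [hlen]) ?_ ?_
    · exact List.nodup_cons.2
        ⟨fun hxl => Finset.notMem_erase x R (hlR (List.mem_toFinset.2 hxl)), hl⟩
    · rw [List.toFinset_cons]
      exact Finset.insert_subset hx (hlR.trans (Finset.erase_subset x R))

lemma drawExp_nonneg (hw : ∀ x, 0 ≤ w x) (hf : ∀ l, 0 ≤ f l) : 0 ≤ drawExp w k R f := by
  induction k generalizing R f with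
  | zero => exact hf []
  | succ k ih => exact pickExp_nonneg hw fun x => ih fun l => hf _

lemma abs_drawExp_le (hw : ∀ x, 0 ≤ w x) : |drawExp w k R f| ≤ drawExp w k R fun l => |f l| := by
  refine abs_le'.2 ⟨drawExp_mono hw fun l _ _ _ => le_abs_self _, ?_⟩
  rw [← neg_one_mul, ← drawExp_const_mul]
  exact drawExp_mono hw fun l _ _ _ => (neg_one_mul _).trans_le (neg_le_abs _)

lemma card_erase_ge {x : α} (hx : x ∈ R) (hk : k + 1 ≤ R.card) : k ≤ (R.erase x).card := by
  rw [Finset.card_erase_of_mem hx]; omega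

lemma drawExp_const (hw : ∀ x, 0 < w x) (hk : k ≤ R.card) (c : ℝ) :
    drawExp w k R (fun _ => c) = c := by
  induction k generalizing R with
  | zero => rfl
  | succ k ih =>
    rw [drawExp_succ, pickExp_congr fun x hx => ih (card_erase_ge hx hk),
      pickExp_const hw (Finset.card_pos.1 (by omega))]

lemma drawExp_take (hw : ∀ x, 0 < w x) {j : ℕ} (hjk : j ≤ k) (hk : k ≤ R.card) :
    drawExp w k R (fun l => f (l.take j)) = drawExp w j R f := by
  induction j generalizing k R f with
  | zero => exact drawExp_const hw hk (f [])
  | succ j ih =>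
    obtain ⟨k, rfl⟩ := Nat.exists_eq_add_of_le' (Nat.one_le_of_lt hjk)
    simp only [drawExp_succ, List.take_succ_cons]
    exact pickExp_congr fun x hx =>
      ih (f := fun l => f (x :: l)) (Nat.le_of_succ_le_succ hjk) (card_erase_ge hx hk)

/-- The probability that the list of the first `k` elements of a size-biased order of `R`
satisfies `P`. -/
def drawProb (w : α → ℝ) (k : ℕ) (R : Finset α) (P : List α → Prop) : ℝ :=
  drawExp w k R fun l => if P l then 1 else 0

variable {P Q : List α → Prop}

lemma drawProb_succ : drawProb w (k + 1) R P =
    pickExp w R fun x => drawProb w k (R.erase x) fun l => P (x :: l) :=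
  rfl

lemma drawProb_le_drawExp (hw : ∀ x, 0 ≤ w x) (hf : ∀ l, 0 ≤ f l) (h : ∀ l, P l → 1 ≤ f l) :
    drawProb w k R P ≤ drawExp w k R f :=
  drawExp_mono hw fun l _ _ _ => by
    split_ifs with hl
    exacts [h l hl, hf l]

lemma drawProb_mono (hw : ∀ x, 0 ≤ w x)
    (h : ∀ l : List α, l.length = k → l.Nodup → l.toFinset ⊆ R → P l → Q l) :
    drawProb w k R P ≤ drawProb w k R Q :=
  drawExp_mono hw fun l hlen hl hlR => by
    by_cases hP : P l
    · simp [hP, h l hlen hl hlR hP]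
    · by_cases hQ : Q l <;> simp [hP, hQ]

lemma drawProb_le_one (hw : ∀ x, 0 < w x) (hk : k ≤ R.card) : drawProb w k R P ≤ 1 :=
  (drawProb_le_drawExp (fun x => (hw x).le) (fun _ => zero_le_one) fun _ _ => le_rfl).trans_eq
    (drawExp_const hw hk 1)

lemma drawProb_or_le (hw : ∀ x, 0 ≤ w x) :
    drawProb w k R (fun l => P l ∨ Q l) ≤ drawProb w k R P + drawProb w k R Q := by
  rw [drawProb, drawProb, drawProb, ← drawExp_add]
  refine drawExp_mono hw fun l _ _ _ => ?_
  by_cases hP : P l <;> by_cases hQ : Q l <;> simp [hP, hQ]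

lemma drawProb_exists_le (hw : ∀ x, 0 ≤ w x) {ι : Type*} (s : Finset ι) (P : ι → List α → Prop) :
    drawProb w k R (fun l => ∃ i ∈ s, P i l) ≤ ∑ i ∈ s, drawProb w k R (P i) := by
  simp only [drawProb, ← drawExp_sum]
  refine drawExp_mono hw fun l _ _ _ => ?_
  have hterm : ∀ i ∈ s, (0 : ℝ) ≤ if P i l then 1 else 0 := fun i _ => by positivity
  split_ifs with h
  · obtain ⟨i, hi, hP⟩ := h
    exact (if_pos hP).ge.trans (Finset.single_le_sum hterm hi)
  · exact Finset.sum_nonneg hterm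

lemma drawProb_take (hw : ∀ x, 0 < w x) {j : ℕ} (hjk : j ≤ k) (hk : k ≤ R.card) :
    drawProb w k R (fun l => P (l.take j)) = drawProb w j R P :=
  drawExp_take (f := fun l => if P l then 1 else 0) hw hjk hk

end Draws

section Means

variable {α : Type*} [DecidableEq α] {w a : α → ℝ} {κ V : ℝ} {k : ℕ} {R : Finset α} {x : α}

/-- The expected sum of the values `a` over the first `k` elements of a size-biased order
of `R`. -/
def meanSum (w a : α → ℝ) (k : ℕ) (R : Finset α) : ℝ :=
  drawExp w k R fun l => (l.map a).sum

/-- The hypotheses on a sampling of `k` elements of `R` without replacement: positive weights `w`,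
nonnegative values `a`, and, whichever `k` elements have been removed from `R`, the next pick has
mean value at most `κ` and mean squared value at most `V`. -/
structure MomentBounds (w a : α → ℝ) (κ V : ℝ) (k : ℕ) (R : Finset α) : Prop where
  w_pos : ∀ x, 0 < w x
  a_nonneg : ∀ x, 0 ≤ a x
  le_card : k ≤ R.card
  mean_le : ∀ T ⊆ R, T.card ≤ k → pickExp w (R \ T) a ≤ κ
  sq_le : ∀ T ⊆ R, T.card ≤ k → pickExp w (R \ T) (fun x => a x ^ 2) ≤ V

namespace MomentBounds

lemma w_nonneg (h : MomentBounds w a κ V k R) (x : α) : 0 ≤ w x :=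
  (h.w_pos x).le

lemma pickExp_le (h : MomentBounds w a κ V k R) : pickExp w R a ≤ κ := by
  simpa using h.mean_le ∅ (Finset.empty_subset R) (by simp)

lemma pickExp_sq_le (h : MomentBounds w a κ V k R) : pickExp w R (fun x => a x ^ 2) ≤ V := by
  simpa using h.sq_le ∅ (Finset.empty_subset R) (by simp)

lemma kappa_nonneg (h : MomentBounds w a κ V k R) : 0 ≤ κ :=
  (pickExp_nonneg h.w_nonneg h.a_nonneg).trans h.pickExp_le

lemma V_nonneg (h : MomentBounds w a κ V k R) : 0 ≤ V :=
  (pickExp_nonneg h.w_nonneg fun x => sq_nonneg (a x)).trans h.pickExp_sq_le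

lemma mono (h : MomentBounds w a κ V k R) {j : ℕ} (hjk : j ≤ k) : MomentBounds w a κ V j R where
  __ := h
  le_card := hjk.trans h.le_card
  mean_le T hT hcard := h.mean_le T hT (hcard.trans hjk)
  sq_le T hT hcard := h.sq_le T hT (hcard.trans hjk)

lemma nonempty (h : MomentBounds w a κ V (k + 1) R) : R.Nonempty :=
  Finset.card_pos.1 (by have := h.le_card; omega)

lemma erase (h : MomentBounds w a κ V (k + 1) R) (hx : x ∈ R) :
    MomentBounds w a κ V k (R.erase x) := by
  have hins : ∀ T ⊆ R.erase x, insert x T ⊆ R := fun T hT =>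
    Finset.insert_subset hx (hT.trans (Finset.erase_subset x R))
  have hcard : ∀ T : Finset α, T.card ≤ k → (insert x T).card ≤ k + 1 := fun T hT =>
    (Finset.card_insert_le x T).trans (Nat.succ_le_succ hT)
  have hsdiff : ∀ T, R.erase x \ T = R \ insert x T := fun T => by
    rw [Finset.sdiff_insert, Finset.erase_sdiff_comm]
  exact ⟨h.w_pos, h.a_nonneg, card_erase_ge hx h.le_card,
    fun T hT hTk => hsdiff T ▸ h.mean_le _ (hins T hT) (hcard T hTk),
    fun T hT hTk => hsdiff T ▸ h.sq_le _ (hins T hT) (hcard T hTk)⟩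

end MomentBounds

lemma erase_sdiff_toFinset (R : Finset α) (x : α) (l : List α) :
    R.erase x \ l.toFinset = R \ (x :: l).toFinset := by
  rw [List.toFinset_cons, Finset.sdiff_insert, Finset.erase_sdiff_comm]

lemma meanSum_zero : meanSum w a 0 R = 0 := rfl

lemma meanSum_succ (hw : ∀ x, 0 < w x) (hk : k + 1 ≤ R.card) :
    meanSum w a (k + 1) R = pickExp w R fun x => a x + meanSum w a k (R.erase x) := by
  simp only [meanSum, drawExp_succ, List.map_cons, List.sum_cons]
  exact pickExp_congr fun x hx => by
    rw [drawExp_add, drawExp_const hw (card_erase_ge hx hk)]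

lemma meanSum_succ_sub (hw : ∀ x, 0 < w x) (hk : k + 1 ≤ R.card) :
    meanSum w a (k + 1) R - meanSum w a k R =
      drawExp w k R fun l => pickExp w (R \ l.toFinset) a := by
  induction k generalizing R with
  | zero => simp [meanSum_succ hw hk, meanSum_zero, drawExp]
  | succ k ih =>
    rw [meanSum_succ hw hk, meanSum_succ hw (by omega), ← pickExp_sub, drawExp_succ]
    refine pickExp_congr fun x hx => ?_
    rw [add_sub_add_left_eq_sub, ih (card_erase_ge hx hk)]
    simp only [erase_sdiff_toFinset]

lemma meanSum_le_succ (h : MomentBounds w a κ V (k + 1) R) :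
    meanSum w a k R ≤ meanSum w a (k + 1) R := by
  rw [← sub_nonneg, meanSum_succ_sub h.w_pos h.le_card]
  exact drawExp_nonneg h.w_nonneg fun l => pickExp_nonneg h.w_nonneg h.a_nonneg

lemma meanSum_succ_le_add (hw : ∀ x, 0 < w x) (hk : k + 1 ≤ R.card)
    (hmean : ∀ T ⊆ R, T.card ≤ k → pickExp w (R \ T) a ≤ κ) :
    meanSum w a (k + 1) R ≤ meanSum w a k R + κ := by
  rw [← sub_le_iff_le_add', meanSum_succ_sub hw hk]
  calc drawExp w k R (fun l => pickExp w (R \ l.toFinset) a)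
      ≤ drawExp w k R fun _ => κ := drawExp_mono (fun x => (hw x).le) fun l hlen _ hlR =>
        hmean _ hlR ((List.toFinset_card_le l).trans hlen.le)
    _ = κ := drawExp_const hw ((Nat.le_succ k).trans hk) κ

lemma meanSum_le_mul (hw : ∀ x, 0 < w x) (hk : k ≤ R.card)
    (hmean : ∀ T ⊆ R, T.card < k → pickExp w (R \ T) a ≤ κ) : meanSum w a k R ≤ k * κ := by
  induction k with
  | zero => simp [meanSum_zero]
  | succ k ih =>
    have hstep := meanSum_succ_le_add hw hk fun T hT hTk => hmean T hT (Nat.lt_succ_of_le hTk)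
    have hprev := ih ((Nat.le_succ k).trans hk) fun T hT hTk =>
      hmean T hT (hTk.trans k.lt_succ_self)
    push_cast
    linarith

lemma MomentBounds.meanSum_succ_le (h : MomentBounds w a κ V (k + 1) R) :
    meanSum w a (k + 1) R ≤ meanSum w a k R + κ :=
  meanSum_succ_le_add h.w_pos h.le_card fun T hT hTk => h.mean_le T hT (hTk.trans k.le_succ)

-- The first pick from `R` is coupled with a pick from `R.erase x` by drawing again when it is `x`.
lemma meanSum_succ_sub_erase (hw : ∀ x, 0 < w x) (hk : k + 2 ≤ R.card) (hx : x ∈ R) :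
    meanSum w a (k + 1) R - meanSum w a (k + 1) (R.erase x) = pickExp w R fun b =>
      if b = x then a x + meanSum w a k (R.erase x) - meanSum w a (k + 1) (R.erase x)
      else meanSum w a k (R.erase b) - meanSum w a k ((R.erase b).erase x) := by
  have hkx := card_erase_ge hx hk
  have hR : 0 < ∑ b ∈ R, w b := Finset.sum_pos (fun b _ => hw b) ⟨x, hx⟩
  have hRx : 0 < ∑ b ∈ R.erase x, w b :=
    Finset.sum_pos (fun b _ => hw b) (Finset.card_pos.1 (by omega))
  have hmean : ∑ b ∈ R.erase x, w b * (a b + meanSum w a k ((R.erase b).erase x)) =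
      meanSum w a (k + 1) (R.erase x) * ∑ b ∈ R.erase x, w b := by
    rw [meanSum_succ hw hkx, pickExp, div_mul_cancel₀ _ hRx.ne']
    exact Finset.sum_congr rfl fun b _ => by rw [Finset.erase_right_comm]
  have hrest : ∀ b ∈ R.erase x, w b * (if b = x
        then a x + meanSum w a k (R.erase x) - meanSum w a (k + 1) (R.erase x)
        else meanSum w a k (R.erase b) - meanSum w a k ((R.erase b).erase x)) =
      w b * (a b + meanSum w a k (R.erase b)) -
        w b * (a b + meanSum w a k ((R.erase b).erase x)) := fun b hb => by
    rw [if_neg (Finset.ne_of_mem_erase hb)]; ring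
  rw [meanSum_succ hw (by omega), pickExp, pickExp, sub_eq_iff_eq_add, div_add' _ _ _ hR.ne',
    ← Finset.add_sum_erase R (fun b => w b * ite _ _ _) hx, Finset.sum_congr rfl hrest,
    Finset.sum_sub_distrib, hmean, if_pos rfl, ← Finset.add_sum_erase R w hx,
    ← Finset.add_sum_erase R (fun b => w b * (a b + meanSum w a k (R.erase b))) hx]
  ring

lemma meanSum_sub_erase_mem_Icc (h : MomentBounds w a κ V (k + 1) R) (hx : x ∈ R) :
    meanSum w a k R - meanSum w a k (R.erase x) ∈ Set.Icc (-κ) (a x) := by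
  induction k generalizing R with
  | zero => simp [meanSum_zero, h.kappa_nonneg, h.a_nonneg x]
  | succ k ih =>
    have hterm : ∀ b ∈ R, (if b = x
        then a x + meanSum w a k (R.erase x) - meanSum w a (k + 1) (R.erase x)
        else meanSum w a k (R.erase b) - meanSum w a k ((R.erase b).erase x)) ∈
        Set.Icc (-κ) (a x) := fun b hb => by
      split_ifs with hbx
      · have hlower := meanSum_le_succ (h.erase hx)
        have hupper := (h.erase hx).meanSum_succ_le
        constructor <;> linarith [h.a_nonneg x]
      · exact ih (h.erase hb) (Finset.mem_erase.2 ⟨Ne.symm hbx, hx⟩)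
    rw [meanSum_succ_sub_erase h.w_pos h.le_card hx]
    constructor
    · exact (pickExp_const h.w_pos h.nonempty _).ge.trans
        (pickExp_mono h.w_nonneg fun b hb => (hterm b hb).1)
    · exact (pickExp_mono h.w_nonneg fun b hb => (hterm b hb).2).trans_eq
        (pickExp_const h.w_pos h.nonempty _)

end Means

section ExponentialMoments

variable {α : Type*} [DecidableEq α] {w a : α → ℝ} {κ V : ℝ} {k : ℕ} {R : Finset α} {x : α}
  {θ t : ℝ}

lemma pickExp_sq_le_of_abs_le (h : MomentBounds w a κ V k R) (hR : R.Nonempty) {d : α → ℝ}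
    (hd : ∀ x ∈ R, |d x| ≤ a x + κ) : pickExp w R (fun x => d x ^ 2) ≤ 2 * V + 2 * κ ^ 2 := by
  calc pickExp w R (fun x => d x ^ 2) ≤ pickExp w R fun x => 2 * a x ^ 2 + 2 * κ ^ 2 :=
        pickExp_mono h.w_nonneg fun x hx =>
          (sq_le_sq' (abs_le.1 (hd x hx)).1 (abs_le.1 (hd x hx)).2).trans
            (by linarith [add_sq_le (a := a x) (b := κ)])
    _ = 2 * pickExp w R (fun x => a x ^ 2) + 2 * κ ^ 2 := by
        rw [pickExp_add, pickExp_const_mul, pickExp_const h.w_pos hR]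
    _ ≤ 2 * V + 2 * κ ^ 2 := by gcongr; exact h.pickExp_sq_le

/-- The change of the conditional expectation of the sum of `k + 1` values drawn from `R` when
the first pick is revealed to be `x`: the increment of the Doob martingale. -/
def doobIncr (w a : α → ℝ) (k : ℕ) (R : Finset α) (x : α) : ℝ :=
  a x + meanSum w a k (R.erase x) - meanSum w a (k + 1) R

lemma pickExp_doobIncr (h : MomentBounds w a κ V (k + 1) R) :
    pickExp w R (doobIncr w a k R) = 0 := by
  unfold doobIncr
  rw [pickExp_sub, ← meanSum_succ h.w_pos h.le_card, pickExp_const h.w_pos h.nonempty, sub_self]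

lemma abs_doobIncr_le (h : MomentBounds w a κ V (k + 1) R) (hx : x ∈ R) :
    |doobIncr w a k R x| ≤ a x + κ := by
  have herase := meanSum_sub_erase_mem_Icc h hx
  have hlower := meanSum_le_succ h
  have hupper := h.meanSum_succ_le
  rw [abs_le, doobIncr]
  constructor <;> linarith [herase.1, herase.2, h.a_nonneg x]

lemma sum_cons_sub_meanSum (l : List α) :
    ((x :: l).map a).sum - meanSum w a (k + 1) R =
      doobIncr w a k R x + ((l.map a).sum - meanSum w a k (R.erase x)) := by
  rw [List.map_cons, List.sum_cons, doobIncr]; ring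

lemma abs_mul_le_one {u b θ : ℝ} (hu : |u| ≤ b) (hθ : |θ| * b ≤ 1) : |θ * u| ≤ 1 :=
  (abs_mul θ u).trans_le ((mul_le_mul_of_nonneg_left hu (abs_nonneg θ)).trans hθ)

lemma drawExp_exp_sub_meanSum_le (h : MomentBounds w a κ V k R)
    (hθ : ∀ x, |θ| * (a x + κ) ≤ 1) :
    drawExp w k R (fun l => Real.exp (θ * ((l.map a).sum - meanSum w a k R))) ≤
      Real.exp (k * (2 * V + 2 * κ ^ 2) * θ ^ 2) := by
  set v := 2 * V + 2 * κ ^ 2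
  induction k generalizing R with
  | zero => simp [drawExp, meanSum_zero]
  | succ k ih =>
    have hd := fun x hx => abs_doobIncr_le h (x := x) hx
    simp only [drawExp_succ, sum_cons_sub_meanSum, mul_add, Real.exp_add, drawExp_const_mul]
    calc _ ≤ pickExp w R fun x =>
          Real.exp (k * v * θ ^ 2) * Real.exp (θ * doobIncr w a k R x) :=
          pickExp_mono h.w_nonneg fun x hx => by
            rw [mul_comm]; gcongr; exact ih (h.erase hx)
      _ ≤ Real.exp (k * v * θ ^ 2) * Real.exp (v * θ ^ 2) := by
          rw [pickExp_const_mul]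
          gcongr
          exact pickExp_exp_le h.w_pos h.nonempty (pickExp_doobIncr h)
            (pickExp_sq_le_of_abs_le h h.nonempty hd) fun x hx => abs_mul_le_one (hd x hx) (hθ x)
      _ = Real.exp ((k + 1 : ℕ) * v * θ ^ 2) := by rw [← Real.exp_add]; push_cast; ring_nf

lemma drawExp_exp_abs_sub_meanSum_le (h : MomentBounds w a κ V k R) (hθ0 : 0 ≤ θ)
    (hθ : ∀ x, θ * (a x + κ) ≤ 1) :
    drawExp w k R (fun l => Real.exp (θ * |(l.map a).sum - meanSum w a k R|)) ≤
      2 * Real.exp (k * (2 * V + 2 * κ ^ 2) * θ ^ 2) := by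
  have hexp : ∀ u, Real.exp (θ * |u|) ≤ Real.exp (θ * u) + Real.exp (-θ * u) := fun u => by
    rcases abs_choice u with hu | hu <;> rw [hu]
    · exact le_add_of_nonneg_right (Real.exp_pos _).le
    · rw [mul_neg, ← neg_mul]; exact le_add_of_nonneg_left (Real.exp_pos _).le
  have hpos := drawExp_exp_sub_meanSum_le h (θ := θ) (by rwa [abs_of_nonneg hθ0])
  have hneg := drawExp_exp_sub_meanSum_le h (θ := -θ) (by rwa [abs_neg, abs_of_nonneg hθ0])
  rw [neg_sq] at hneg
  calc _ ≤ _ := drawExp_mono h.w_nonneg fun l _ _ _ => hexp _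
    _ ≤ _ := by rw [drawExp_add, two_mul]; exact add_le_add hpos hneg

lemma drawExp_exp_sub_abs_sub_meanSum_le (h : MomentBounds w a κ V k R) (hθ0 : 0 ≤ θ)
    (hθ : ∀ x, θ * (a x + κ) ≤ 1) :
    drawExp w k R (fun l => Real.exp (θ * (|(l.map a).sum - meanSum w a k R| - t))) ≤
      2 * Real.exp (-θ * t + k * (2 * V + 2 * κ ^ 2) * θ ^ 2) := by
  have hfactor : ∀ u, Real.exp (θ * (u - t)) = Real.exp (-θ * t) * Real.exp (θ * u) := fun u => by
    rw [← Real.exp_add]; ring_nf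
  simp only [hfactor, drawExp_const_mul]
  rw [Real.exp_add, mul_left_comm]
  gcongr
  exact drawExp_exp_abs_sub_meanSum_le h hθ0 hθ

lemma one_le_exp_mul_sub (hθ0 : 0 ≤ θ) {u : ℝ} (hu : t ≤ u) : 1 ≤ Real.exp (θ * (u - t)) :=
  Real.one_le_exp (mul_nonneg hθ0 (sub_nonneg.2 hu))

/-- The deviation from its mean of the sum of the values `a` over the first `k` elements of a
list `l` drawn from `R`. -/
def sumDev (w a : α → ℝ) (R : Finset α) (k : ℕ) (l : List α) : ℝ :=
  ((l.take k).map a).sum - meanSum w a k R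

lemma sumDev_take {j : ℕ} (hjk : j ≤ k) (l : List α) :
    sumDev w a R j (l.take k) = sumDev w a R j l := by
  rw [sumDev, sumDev, List.take_take, min_eq_left hjk]

lemma drawProb_le_abs_sumDev (h : MomentBounds w a κ V k R) {j : ℕ} (hjk : j ≤ k) (hθ0 : 0 ≤ θ)
    (hθ : ∀ x, θ * (a x + κ) ≤ 1) :
    drawProb w k R (fun l => t ≤ |sumDev w a R j l|) ≤
      2 * Real.exp (-θ * t + k * (2 * V + 2 * κ ^ 2) * θ ^ 2) := by
  have hV := h.V_nonneg
  calc _ = drawProb w j R fun l => t ≤ |(l.map a).sum - meanSum w a j R| :=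
        drawProb_take (P := fun l => t ≤ |(l.map a).sum - meanSum w a j R|) h.w_pos hjk h.le_card
    _ ≤ drawExp w j R fun l => Real.exp (θ * (|(l.map a).sum - meanSum w a j R| - t)) :=
        drawProb_le_drawExp h.w_nonneg (fun l => (Real.exp_pos _).le)
          fun l hl => one_le_exp_mul_sub hθ0 hl
    _ ≤ 2 * Real.exp (-θ * t + j * (2 * V + 2 * κ ^ 2) * θ ^ 2) :=
        drawExp_exp_sub_abs_sub_meanSum_le (h.mono hjk) hθ0 hθ
    _ ≤ _ := by gcongr

-- By Jensen's inequality the average of the deviations satisfies the tail bound of each of them.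
lemma drawProb_mul_lt_sum_abs_sumDev (h : MomentBounds w a κ V k R) (hθ0 : 0 ≤ θ)
    (hθ : ∀ x, θ * (a x + κ) ≤ 1) :
    drawProb w k R (fun l => k * t < ∑ i ∈ Finset.range k, |sumDev w a R i l|) ≤
      2 * Real.exp (-θ * t + k * (2 * V + 2 * κ ^ 2) * θ ^ 2) := by
  obtain rfl | hk := k.eq_zero_or_pos
  · simp only [drawProb, drawExp, Nat.cast_zero, zero_mul, Finset.range_zero, Finset.sum_empty,
      lt_irrefl, if_false]
    positivity
  have hV := h.V_nonneg
  have hk' : (0 : ℝ) < k := Nat.cast_pos.2 hk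
  have hjensen : ∀ X : ℕ → ℝ, k * t < ∑ i ∈ Finset.range k, X i →
      1 ≤ ∑ i ∈ Finset.range k, (k : ℝ)⁻¹ * Real.exp (θ * (X i - t)) := fun X hX => by
    have hconv := convexOn_exp.map_sum_le (t := Finset.range k) (w := fun _ => (k : ℝ)⁻¹)
      (p := fun i => θ * (X i - t)) (fun _ _ => by positivity) (by simp [hk'.ne'])
      fun _ _ => Set.mem_univ _
    refine le_trans (Real.one_le_exp ?_) hconv
    simp only [smul_eq_mul, ← Finset.mul_sum, Finset.sum_sub_distrib, Finset.sum_const,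
      Finset.card_range, nsmul_eq_mul]
    exact mul_nonneg (by positivity) (mul_nonneg hθ0 (by linarith))
  calc _ ≤ drawExp w k R fun l =>
        ∑ i ∈ Finset.range k, (k : ℝ)⁻¹ * Real.exp (θ * (|sumDev w a R i l| - t)) :=
        drawProb_le_drawExp h.w_nonneg (fun l => by positivity) fun l => hjensen _
    _ ≤ ∑ i ∈ Finset.range k, (k : ℝ)⁻¹ *
        (2 * Real.exp (-θ * t + k * (2 * V + 2 * κ ^ 2) * θ ^ 2)) := by
        rw [drawExp_sum]
        refine Finset.sum_le_sum fun i hi => ?_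
        have hik := (Finset.mem_range.1 hi).le
        rw [drawExp_const_mul]
        gcongr
        calc _ = _ := drawExp_take (f := fun l => Real.exp (θ *
              (|(l.map a).sum - meanSum w a i R| - t))) h.w_pos hik h.le_card
          _ ≤ _ := drawExp_exp_sub_abs_sub_meanSum_le (h.mono hik) hθ0 hθ
          _ ≤ _ := by gcongr
    _ = _ := by
        rw [Finset.sum_const, Finset.card_range, nsmul_eq_mul, mul_inv_cancel_left₀ hk'.ne']

lemma drawExp_sub_meanSum (h : MomentBounds w a κ V k R) :
    drawExp w k R (fun l => (l.map a).sum - meanSum w a k R) = 0 := by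
  rw [drawExp_sub, drawExp_const h.w_pos h.le_card, meanSum, sub_self]

lemma drawExp_sq_sub_meanSum_le (h : MomentBounds w a κ V k R) :
    drawExp w k R (fun l => ((l.map a).sum - meanSum w a k R) ^ 2) ≤
      k * (2 * V + 2 * κ ^ 2) := by
  induction k generalizing R with
  | zero => simp [drawExp, meanSum_zero]
  | succ k ih =>
    have hstep : ∀ x ∈ R, drawExp w k (R.erase x) (fun l =>
        (((x :: l).map a).sum - meanSum w a (k + 1) R) ^ 2) ≤
          doobIncr w a k R x ^ 2 + k * (2 * V + 2 * κ ^ 2) := fun x hx => by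
      simp only [sum_cons_sub_meanSum, add_sq, drawExp_add, drawExp_const_mul,
        drawExp_const h.w_pos (card_erase_ge hx h.le_card), drawExp_sub_meanSum (h.erase hx),
        mul_zero, add_zero]
      gcongr
      exact ih (h.erase hx)
    calc _ ≤ pickExp w R fun x => doobIncr w a k R x ^ 2 + k * (2 * V + 2 * κ ^ 2) :=
          pickExp_mono h.w_nonneg hstep
      _ ≤ (2 * V + 2 * κ ^ 2) + k * (2 * V + 2 * κ ^ 2) := by
          rw [pickExp_add, pickExp_const h.w_pos h.nonempty]
          gcongr
          exact pickExp_sq_le_of_abs_le h h.nonempty fun x hx => abs_doobIncr_le h hx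
      _ = (k + 1 : ℕ) * (2 * V + 2 * κ ^ 2) := by push_cast; ring

lemma drawExp_abs_sub_meanSum_le (h : MomentBounds w a κ V k R) (ht : 0 < t)
    (hkt : k * (2 * V + 2 * κ ^ 2) ≤ t ^ 2) :
    drawExp w k R (fun l => |(l.map a).sum - meanSum w a k R|) ≤ t := by
  have hamgm : ∀ u : ℝ, |u| ≤ (2 * t)⁻¹ * (u ^ 2 + t ^ 2) := fun u => by
    rw [le_inv_mul_iff₀ (by positivity), ← sq_abs u]
    linarith [two_mul_le_add_sq |u| t]
  calc _ ≤ _ := drawExp_mono h.w_nonneg fun l _ _ _ => hamgm _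
    _ ≤ (2 * t)⁻¹ * (t ^ 2 + t ^ 2) := by
        rw [drawExp_const_mul, drawExp_add, drawExp_const h.w_pos h.le_card]
        gcongr
        exact (drawExp_sq_sub_meanSum_le h).trans hkt
    _ = t := by field_simp; ring

/-- The sum of the values of the first `j` elements of `l`, drawn from `R`, minus the conditional
means of these values given the preceding draws. It is a martingale in `j`. -/
def compensatedSum (w a : α → ℝ) (R : Finset α) (j : ℕ) (l : List α) : ℝ :=
  ((l.take j).map a).sum - ∑ i ∈ Finset.range j, pickExp w (R \ (l.take i).toFinset) a

lemma compensatedSum_zero (l : List α) : compensatedSum w a R 0 l = 0 := by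
  simp [compensatedSum]

lemma compensatedSum_succ_cons (j : ℕ) (l : List α) : compensatedSum w a R (j + 1) (x :: l) =
    (a x - pickExp w R a) + compensatedSum w a (R.erase x) j l := by
  simp only [compensatedSum, Finset.sum_range_succ', List.take_succ_cons, List.map_cons,
    List.sum_cons, List.take_zero, erase_sdiff_toFinset, List.toFinset_nil, Finset.sdiff_empty]
  ring

lemma exists_le_mul_compensatedSum_cons {c : ℝ} (ht : 0 < t) {l : List α} :
    (∃ j ≤ k + 1, t ≤ c * compensatedSum w a R j (x :: l)) ↔
      ∃ j ≤ k, t - c * (a x - pickExp w R a) ≤ c * compensatedSum w a (R.erase x) j l := by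
  constructor
  · rintro ⟨_ | j, hj, hle⟩
    · rw [compensatedSum_zero, mul_zero] at hle
      exact absurd hle ht.not_ge
    · rw [compensatedSum_succ_cons] at hle
      exact ⟨j, Nat.le_of_succ_le_succ hj, by linarith⟩
  · rintro ⟨j, hj, hle⟩
    exact ⟨j + 1, Nat.succ_le_succ hj, by rw [compensatedSum_succ_cons]; linarith⟩

lemma pickExp_exp_mul_sub_le (h : MomentBounds w a κ V k R) (hR : R.Nonempty) {c : ℝ}
    (hc : |c| = 1) (hθ0 : 0 ≤ θ) (hθ : ∀ x, θ * (a x + κ) ≤ 1) :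
    pickExp w R (fun x => Real.exp (θ * (c * (a x - pickExp w R a)))) ≤
      Real.exp ((2 * V + 2 * κ ^ 2) * θ ^ 2) := by
  have hmean : pickExp w R (fun x => c * (a x - pickExp w R a)) = 0 := by
    rw [pickExp_const_mul, pickExp_sub, pickExp_const h.w_pos hR, sub_self, mul_zero]
  have hle : ∀ x, |c * (a x - pickExp w R a)| ≤ a x + κ := fun x => by
    have := pickExp_nonneg (R := R) h.w_nonneg h.a_nonneg
    rw [abs_mul, hc, one_mul, abs_le]
    constructor <;> linarith [h.a_nonneg x, h.pickExp_le]
  exact pickExp_exp_le h.w_pos hR hmean (pickExp_sq_le_of_abs_le h hR fun x _ => hle x)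
    fun x _ => abs_mul_le_one (hle x) (by rw [abs_of_nonneg hθ0]; exact hθ x)

-- Doob's maximal inequality for the exponential supermartingale, by induction on the first pick.
lemma drawProb_exists_le_mul_compensatedSum (h : MomentBounds w a κ V k R) {c : ℝ} (hc : |c| = 1)
    (hθ0 : 0 ≤ θ) (hθ : ∀ x, θ * (a x + κ) ≤ 1) :
    drawProb w k R (fun l => ∃ j ≤ k, t ≤ c * compensatedSum w a R j l) ≤
      Real.exp (-θ * t + k * (2 * V + 2 * κ ^ 2) * θ ^ 2) := by
  have hV := h.V_nonneg
  set v := 2 * V + 2 * κ ^ 2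
  induction k generalizing R t with
  | zero =>
    rw [drawProb, drawExp]
    split_ifs with hmax
    · obtain ⟨j, hj, hle⟩ := hmax
      rw [Nat.le_zero.1 hj, compensatedSum_zero, mul_zero] at hle
      rw [Real.one_le_exp_iff]
      simpa using mul_nonpos_of_nonneg_of_nonpos hθ0 hle
    · positivity
  | succ k ih =>
    rcases le_or_gt t 0 with ht | ht
    · refine (drawProb_le_one h.w_pos h.le_card).trans (Real.one_le_exp_iff.2 ?_)
      have := mul_nonpos_of_nonneg_of_nonpos hθ0 ht
      have : 0 ≤ ((k + 1 : ℕ) : ℝ) * v * θ ^ 2 := by positivity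
      linarith
    simp only [drawProb_succ, exists_le_mul_compensatedSum_cons ht]
    calc _ ≤ pickExp w R fun x => Real.exp (-θ * t + k * v * θ ^ 2) *
          Real.exp (θ * (c * (a x - pickExp w R a))) :=
          pickExp_mono h.w_nonneg fun x hx => (ih (h.erase hx)).trans_eq <| by
            rw [← Real.exp_add]; ring_nf
      _ ≤ Real.exp (-θ * t + k * v * θ ^ 2) * Real.exp (v * θ ^ 2) := by
          rw [pickExp_const_mul]
          gcongr
          exact pickExp_exp_mul_sub_le h h.nonempty hc hθ0 hθ
      _ = Real.exp (-θ * t + (k + 1 : ℕ) * v * θ ^ 2) := by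
          rw [← Real.exp_add]; push_cast; ring_nf

lemma drawProb_exists_le_abs_compensatedSum (h : MomentBounds w a κ V k R) (hθ0 : 0 ≤ θ)
    (hθ : ∀ x, θ * (a x + κ) ≤ 1) :
    drawProb w k R (fun l => ∃ j ≤ k, t ≤ |compensatedSum w a R j l|) ≤
      2 * Real.exp (-θ * t + k * (2 * V + 2 * κ ^ 2) * θ ^ 2) := by
  calc _ ≤ drawProb w k R (fun l => (∃ j ≤ k, t ≤ 1 * compensatedSum w a R j l) ∨
        ∃ j ≤ k, t ≤ -1 * compensatedSum w a R j l) :=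
        drawProb_mono h.w_nonneg fun l _ _ _ ⟨j, hj, hle⟩ => (le_abs.1 hle).imp
          (fun hpos => ⟨j, hj, by rwa [one_mul]⟩) fun hneg => ⟨j, hj, by rwa [neg_one_mul]⟩
    _ ≤ _ := drawProb_or_le h.w_nonneg
    _ ≤ _ := by
        rw [two_mul]
        exact add_le_add (drawProb_exists_le_mul_compensatedSum h (by simp) hθ0 hθ)
          (drawProb_exists_le_mul_compensatedSum h (by simp) hθ0 hθ)

end ExponentialMoments

section LightWeights

variable {α : Type*} [DecidableEq α] {w a : α → ℝ} {κ lam t θ : ℝ} {m i j : ℕ} {l : List α}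

lemma sumDev_zero (R : Finset α) (l : List α) : sumDev w a R 0 l = 0 := by
  simp [sumDev, meanSum_zero]

lemma card_toFinset_take_le (l : List α) : (l.take i).toFinset.card ≤ i :=
  (List.toFinset_card_le _).trans (List.length_take_le i l)

variable [Fintype α]

/-- The hypotheses on the weights in the concentration inequality: every set of at most `m`
elements leaves a total weight of at least `lam`, while the sums of the squares and of the cubes
of the weights are at most `κ * lam`. -/
structure LightWeights (w : α → ℝ) (κ lam : ℝ) (m : ℕ) : Prop where
  w_pos : ∀ x, 0 < w x
  lam_pos : 0 < lam
  le_sum : ∀ T : Finset α, T.card ≤ m → lam ≤ ∑ x ∈ Finset.univ \ T, w x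
  sum_sq_le : ∑ x, w x ^ 2 ≤ κ * lam
  sum_cube_le : ∑ x, w x ^ 3 ≤ κ * lam

lemma pickExp_sdiff_sub_pickExp_sdiff {T T' : Finset α} (hT : 0 < ∑ x ∈ Finset.univ \ T, w x)
    (hT' : 0 < ∑ x ∈ Finset.univ \ T', w x) :
    pickExp w (Finset.univ \ T) a - pickExp w (Finset.univ \ T') a =
      ((∑ x ∈ T', w x * a x - ∑ x ∈ T, w x * a x) +
        pickExp w (Finset.univ \ T') a * (∑ x ∈ T, w x - ∑ x ∈ T', w x)) /
        ∑ x ∈ Finset.univ \ T, w x := by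
  have hsum : ∀ (f : α → ℝ) (U : Finset α),
      ∑ x ∈ U, f x = ∑ x, f x - ∑ x ∈ Finset.univ \ U, f x := fun f U =>
    eq_sub_of_add_eq' (Finset.sum_sdiff (Finset.subset_univ U))
  simp only [hsum _ T, hsum _ T', pickExp]
  field_simp
  ring

namespace LightWeights

lemma w_nonneg (h : LightWeights w κ lam m) (x : α) : 0 ≤ w x :=
  (h.w_pos x).le

lemma kappa_nonneg (h : LightWeights w κ lam m) : 0 ≤ κ :=
  nonneg_of_mul_nonneg_left ((Finset.sum_nonneg fun x _ => sq_nonneg (w x)).trans h.sum_sq_le)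
    h.lam_pos

lemma lt_card (h : LightWeights w κ lam m) : m < (Finset.univ : Finset α).card := by
  by_contra! hle
  have := h.le_sum Finset.univ hle
  rw [sdiff_self, Finset.bot_eq_empty, Finset.sum_empty] at this
  exact this.not_gt h.lam_pos

lemma pickExp_sdiff_le (h : LightWeights w κ lam m) (ha : ∀ x, 0 ≤ a x)
    (hwa : ∑ x, w x * a x ≤ κ * lam) {T : Finset α} (hT : T.card ≤ m) :
    pickExp w (Finset.univ \ T) a ≤ κ := by
  have hlam := h.le_sum T hT
  rw [pickExp, div_le_iff₀ (h.lam_pos.trans_le hlam)]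
  calc ∑ x ∈ Finset.univ \ T, w x * a x ≤ ∑ x, w x * a x :=
        Finset.sum_le_univ_sum_of_nonneg fun x => mul_nonneg (h.w_nonneg x) (ha x)
    _ ≤ κ * lam := hwa
    _ ≤ κ * ∑ x ∈ Finset.univ \ T, w x := mul_le_mul_of_nonneg_left hlam h.kappa_nonneg

lemma pickExp_sdiff_weight_le (h : LightWeights w κ lam m) {T : Finset α} (hT : T.card ≤ m) :
    pickExp w (Finset.univ \ T) w ≤ κ :=
  h.pickExp_sdiff_le h.w_nonneg (by simpa only [← sq] using h.sum_sq_le) hT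

lemma pickExp_sdiff_weight_sq_le (h : LightWeights w κ lam m) {T : Finset α} (hT : T.card ≤ m) :
    pickExp w (Finset.univ \ T) (fun x => w x ^ 2) ≤ κ :=
  h.pickExp_sdiff_le (fun x => sq_nonneg (w x)) (by simpa only [← pow_succ'] using h.sum_cube_le) hT

lemma momentBounds (h : LightWeights w κ lam m) (ha0 : ∀ x, 0 ≤ a x) (haw : ∀ x, a x ≤ w x) :
    MomentBounds w a κ κ m Finset.univ where
  w_pos := h.w_pos
  a_nonneg := ha0
  le_card := h.lt_card.le
  mean_le _ _ hT := (pickExp_mono h.w_nonneg fun x _ => haw x).trans (h.pickExp_sdiff_weight_le hT)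
  sq_le _ _ hT := (pickExp_mono h.w_nonneg fun x _ => pow_le_pow_left₀ (ha0 x) (haw x) 2).trans
    (h.pickExp_sdiff_weight_sq_le hT)

lemma momentBounds_weight (h : LightWeights w κ lam m) : MomentBounds w w κ κ m Finset.univ :=
  h.momentBounds h.w_nonneg fun _ => le_rfl

lemma pickExp_sdiff_sub_le (h : LightWeights w κ lam m) {T T' : Finset α} (hT : T.card ≤ m)
    (hT' : T'.card ≤ m) :
    pickExp w (Finset.univ \ T) w - pickExp w (Finset.univ \ T') w ≤
      (κ * ∑ x ∈ T, w x + ∑ x ∈ T', w x ^ 2) / lam := by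
  have hsum : ∀ U : Finset α, 0 ≤ ∑ x ∈ U, w x := fun U => Finset.sum_nonneg fun x _ => h.w_nonneg x
  have hsq : ∀ U : Finset α, 0 ≤ ∑ x ∈ U, w x ^ 2 := fun U =>
    Finset.sum_nonneg fun x _ => sq_nonneg (w x)
  have hlam := h.lam_pos
  have hκ := h.kappa_nonneg
  have hp := h.pickExp_sdiff_weight_le hT'
  have hp0 := pickExp_nonneg (R := Finset.univ \ T') h.w_nonneg h.w_nonneg
  rw [pickExp_sdiff_sub_pickExp_sdiff (hlam.trans_le (h.le_sum T hT))
    (hlam.trans_le (h.le_sum T' hT'))]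
  simp only [← sq]
  have hnum : (∑ x ∈ T', w x ^ 2 - ∑ x ∈ T, w x ^ 2) + pickExp w (Finset.univ \ T') w *
      (∑ x ∈ T, w x - ∑ x ∈ T', w x) ≤ κ * ∑ x ∈ T, w x + ∑ x ∈ T', w x ^ 2 := by
    rw [mul_sub]
    linarith [hsq T, mul_le_mul_of_nonneg_right hp (hsum T), mul_nonneg hp0 (hsum T')]
  exact div_le_div₀ (add_nonneg (mul_nonneg hκ (hsum T)) (hsq T')) hnum hlam (h.le_sum T hT)

lemma abs_pickExp_sdiff_sub_le (h : LightWeights w κ lam m) {T T' : Finset α} (hT : T.card ≤ m)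
    (hT' : T'.card ≤ m) :
    |pickExp w (Finset.univ \ T) w - pickExp w (Finset.univ \ T') w| ≤
      (|∑ x ∈ T, w x ^ 2 - ∑ x ∈ T', w x ^ 2| + κ * |∑ x ∈ T, w x - ∑ x ∈ T', w x|) / lam := by
  have hlam := h.lam_pos
  have hκ := h.kappa_nonneg
  have hp0 := pickExp_nonneg (R := Finset.univ \ T') h.w_nonneg h.w_nonneg
  rw [pickExp_sdiff_sub_pickExp_sdiff (hlam.trans_le (h.le_sum T hT))
    (hlam.trans_le (h.le_sum T' hT')), abs_div, abs_of_pos (hlam.trans_le (h.le_sum T hT))]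
  simp only [← sq]
  refine div_le_div₀ (by positivity) ((abs_add_le _ _).trans ?_) hlam (h.le_sum T hT)
  rw [abs_sub_comm, abs_mul, abs_of_nonneg hp0]
  gcongr
  exact h.pickExp_sdiff_weight_le hT'

end LightWeights

/-- The conditional mean of the draw following the first `i` elements of `l`, minus its
unconditional mean. -/
def driftDev (w a : α → ℝ) (i : ℕ) (l : List α) : ℝ :=
  pickExp w (Finset.univ \ (l.take i).toFinset) a -
    (meanSum w a (i + 1) Finset.univ - meanSum w a i Finset.univ)

lemma sumDev_sub_sumDev (hij : i ≤ j) (l : List α) :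
    sumDev w a Finset.univ j l - sumDev w a Finset.univ i l =
      compensatedSum w a Finset.univ j l - compensatedSum w a Finset.univ i l +
        ∑ p ∈ Finset.Ico i j, driftDev w a p l := by
  simp only [driftDev]
  rw [Finset.sum_sub_distrib, Finset.sum_Ico_sub (fun p => meanSum w a p Finset.univ) hij,
    Finset.sum_Ico_eq_sub _ hij, sumDev, sumDev, compensatedSum, compensatedSum]
  ring

-- The unconditional mean is an average over an independent copy `l'` of the first draws.
lemma driftDev_eq (hw : ∀ x, 0 < w x) (hi : i < (Finset.univ : Finset α).card) :
    driftDev w a i l = drawExp w i Finset.univ fun l' =>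
      pickExp w (Finset.univ \ (l.take i).toFinset) a -
        pickExp w (Finset.univ \ l'.toFinset) a := by
  rw [drawExp_sub, drawExp_const hw hi.le, ← meanSum_succ_sub hw hi, driftDev]

lemma abs_sumDev_lt (hjm : j ≤ m)
    (hM : |compensatedSum w w Finset.univ j l| < t)
    (hdrift : ∑ i ∈ Finset.range m, |driftDev w w i l| ≤ 4 * t) :
    |sumDev w w Finset.univ j l| < 5 * t := by
  have hsplit := sumDev_sub_sumDev (w := w) (a := w) j.zero_le l
  rw [sumDev_zero, compensatedSum_zero, sub_zero, sub_zero, ← Finset.range_eq_Ico] at hsplit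
  have hsum : |∑ i ∈ Finset.range j, driftDev w w i l| ≤ 4 * t :=
    (Finset.abs_sum_le_sum_abs _ _).trans <|
      (Finset.sum_le_sum_of_subset_of_nonneg (Finset.range_mono hjm) fun _ _ _ =>
        abs_nonneg _).trans hdrift
  rw [hsplit]
  linarith [abs_add_le (compensatedSum w w Finset.univ j l)
    (∑ i ∈ Finset.range j, driftDev w w i l)]

namespace LightWeights

lemma driftDev_le (h : LightWeights w κ lam m) (hl : l.Nodup) (him : i ≤ m) :
    driftDev w w i l ≤ κ * (((l.take i).map w).sum + m) / lam := by
  have hlam := h.lam_pos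
  have hκ := h.kappa_nonneg
  have hsq : meanSum w (fun x => w x ^ 2) i Finset.univ ≤ i * κ :=
    meanSum_le_mul h.w_pos (him.trans h.lt_card.le) fun T _ hT =>
      h.pickExp_sdiff_weight_sq_le (hT.le.trans him)
  rw [driftDev_eq h.w_pos (him.trans_lt h.lt_card)]
  calc _ ≤ drawExp w i Finset.univ fun l' =>
        lam⁻¹ * (κ * ((l.take i).map w).sum + (l'.map fun x => w x ^ 2).sum) :=
        drawExp_mono h.w_nonneg fun l' hlen hl' _ => by
          rw [inv_mul_eq_div, ← List.sum_toFinset w (hl.sublist (l.take_sublist i)),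
            ← List.sum_toFinset _ hl']
          exact h.pickExp_sdiff_sub_le ((card_toFinset_take_le l).trans him)
            ((List.toFinset_card_le l').trans (hlen.trans_le him))
    _ = lam⁻¹ * (κ * ((l.take i).map w).sum + meanSum w (fun x => w x ^ 2) i Finset.univ) := by
        rw [drawExp_const_mul, drawExp_add, drawExp_const h.w_pos (him.trans h.lt_card.le), meanSum]
    _ ≤ lam⁻¹ * (κ * ((l.take i).map w).sum + m * κ) := by
        gcongr
        exact hsq.trans (by gcongr)
    _ = κ * (((l.take i).map w).sum + m) / lam := by ring

lemma mul_abs_pickExp_sdiff_sub_le (h : LightWeights w κ lam m) {l' : List α} (hl : l.Nodup)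
    (hl' : l'.Nodup) (hlm : l.length ≤ m) (hlm' : l'.length ≤ m) :
    m * |pickExp w (Finset.univ \ l.toFinset) w - pickExp w (Finset.univ \ l'.toFinset) w| ≤
      |(l.map fun x => m / lam * w x ^ 2).sum - (l'.map fun x => m / lam * w x ^ 2).sum| +
        |(l.map fun x => κ * m / lam * w x).sum - (l'.map fun x => κ * m / lam * w x).sum| := by
  have hlam := h.lam_pos
  have hκ := h.kappa_nonneg
  simp only [List.sum_map_mul_left, ← mul_sub, abs_mul]
  rw [abs_of_nonneg (by positivity : 0 ≤ m / lam), abs_of_nonneg (by positivity : 0 ≤ κ * m / lam),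
    ← List.sum_toFinset w hl, ← List.sum_toFinset w hl', ← List.sum_toFinset _ hl,
    ← List.sum_toFinset _ hl']
  calc _ ≤ m * ((|∑ x ∈ l.toFinset, w x ^ 2 - ∑ x ∈ l'.toFinset, w x ^ 2| +
        κ * |∑ x ∈ l.toFinset, w x - ∑ x ∈ l'.toFinset, w x|) / lam) := by
        gcongr
        exact h.abs_pickExp_sdiff_sub_le ((List.toFinset_card_le l).trans hlm)
          ((List.toFinset_card_le l').trans hlm')
    _ = _ := by ring

lemma scaledSq_le (h : LightWeights w κ lam m) (hw : ∀ x, m * w x ≤ lam) (x : α) :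
    m / lam * w x ^ 2 ≤ w x := by
  rw [div_mul_eq_mul_div, div_le_iff₀ h.lam_pos, sq, ← mul_assoc, mul_comm (w x)]
  exact mul_le_mul_of_nonneg_right (hw x) (h.w_nonneg x)

lemma scaled_le (h : LightWeights w κ lam m) (hκm : κ * m ≤ lam) (x : α) :
    κ * m / lam * w x ≤ w x :=
  mul_le_of_le_one_left (h.w_nonneg x) ((div_le_one h.lam_pos).2 hκm)

lemma momentBounds_scaledSq (h : LightWeights w κ lam m) (hw : ∀ x, m * w x ≤ lam) :
    MomentBounds w (fun x => m / lam * w x ^ 2) κ κ m Finset.univ :=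
  have hlam := h.lam_pos
  h.momentBounds (fun x => by positivity) (h.scaledSq_le hw)

lemma momentBounds_scaled (h : LightWeights w κ lam m) (hκm : κ * m ≤ lam) :
    MomentBounds w (fun x => κ * m / lam * w x) κ κ m Finset.univ :=
  have hlam := h.lam_pos
  have hκ := h.kappa_nonneg
  h.momentBounds (fun x => mul_nonneg (by positivity) (h.w_nonneg x)) (h.scaled_le hκm)

lemma mul_abs_driftDev_le (h : LightWeights w κ lam m) (hw : ∀ x, m * w x ≤ lam)
    (hκm : κ * m ≤ lam) (ht : 0 < t) (hmt : m * (2 * κ + 2 * κ ^ 2) ≤ t ^ 2) (hl : l.Nodup)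
    (him : i ≤ m) :
    m * |driftDev w w i l| ≤ |sumDev w (fun x => m / lam * w x ^ 2) Finset.univ i l| +
      |sumDev w (fun x => κ * m / lam * w x) Finset.univ i l| + 2 * t := by
  have hκ := h.kappa_nonneg
  have hQ := (h.momentBounds_scaledSq hw).mono him
  have hS := (h.momentBounds_scaled hκm).mono him
  have hit : i * (2 * κ + 2 * κ ^ 2) ≤ t ^ 2 := le_trans (by gcongr) hmt
  have hcopy : ∀ (a : α → ℝ) (l' : List α),
      |((l.take i).map a).sum - (l'.map a).sum| ≤ |sumDev w a Finset.univ i l| +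
        |(l'.map a).sum - meanSum w a i Finset.univ| := fun a l' => by
    rw [sumDev, abs_sub_comm (l'.map a).sum]
    exact abs_sub_le _ _ _
  rw [driftDev_eq h.w_pos (him.trans_lt h.lt_card)]
  calc _ ≤ m * drawExp w i Finset.univ fun l' => |pickExp w (Finset.univ \ (l.take i).toFinset) w -
        pickExp w (Finset.univ \ l'.toFinset) w| := by
        gcongr
        exact abs_drawExp_le h.w_nonneg
    _ ≤ drawExp w i Finset.univ fun l' =>
        (|sumDev w (fun x => m / lam * w x ^ 2) Finset.univ i l| +
          |(l'.map fun x => m / lam * w x ^ 2).sum - meanSum w _ i Finset.univ|) +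
        (|sumDev w (fun x => κ * m / lam * w x) Finset.univ i l| +
          |(l'.map fun x => κ * m / lam * w x).sum - meanSum w _ i Finset.univ|) := by
        rw [← drawExp_const_mul]
        exact drawExp_mono h.w_nonneg fun l' hlen hl' _ =>
          (h.mul_abs_pickExp_sdiff_sub_le (hl.sublist (l.take_sublist i)) hl'
            ((List.length_take_le i l).trans him) (hlen.trans_le him)).trans
            (add_le_add (hcopy _ l') (hcopy _ l'))
    _ ≤ _ := by
        simp only [drawExp_add, drawExp_const h.w_pos hQ.le_card]
        linarith [drawExp_abs_sub_meanSum_le hQ ht hit, drawExp_abs_sub_meanSum_le hS ht hit]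

lemma sum_abs_driftDev_le (h : LightWeights w κ lam m) (hw : ∀ x, m * w x ≤ lam)
    (hκm : κ * m ≤ lam) (ht : 0 < t) (hmt : m * (2 * κ + 2 * κ ^ 2) ≤ t ^ 2) (hl : l.Nodup)
    (hQ : ∑ i ∈ Finset.range m, |sumDev w (fun x => m / lam * w x ^ 2) Finset.univ i l| ≤ m * t)
    (hS : ∑ i ∈ Finset.range m, |sumDev w (fun x => κ * m / lam * w x) Finset.univ i l| ≤ m * t) :
    ∑ i ∈ Finset.range m, |driftDev w w i l| ≤ 4 * t := by
  obtain rfl | hm := m.eq_zero_or_pos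
  · simpa using ht.le
  refine le_of_mul_le_mul_left ?_ (Nat.cast_pos.2 hm : (0 : ℝ) < m)
  calc m * ∑ i ∈ Finset.range m, |driftDev w w i l|
      ≤ ∑ i ∈ Finset.range m, (|sumDev w (fun x => m / lam * w x ^ 2) Finset.univ i l| +
        |sumDev w (fun x => κ * m / lam * w x) Finset.univ i l| + 2 * t) := by
        rw [Finset.mul_sum]
        exact Finset.sum_le_sum fun i hi =>
          h.mul_abs_driftDev_le hw hκm ht hmt hl (Finset.mem_range.1 hi).le
    _ ≤ m * (4 * t) := by
        simp only [Finset.sum_add_distrib, Finset.sum_const, Finset.card_range, nsmul_eq_mul]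
        linarith

lemma drawProb_exists_five_mul_le_abs_sumDev (h : LightWeights w κ lam m)
    (hw : ∀ x, m * w x ≤ lam) (hκm : κ * m ≤ lam) (ht : 0 < t)
    (hmt : m * (2 * κ + 2 * κ ^ 2) ≤ t ^ 2) (hθ0 : 0 ≤ θ) (hθ : ∀ x, θ * (w x + κ) ≤ 1) :
    drawProb w m Finset.univ (fun l => ∃ j ≤ m, 5 * t ≤ |sumDev w w Finset.univ j l|) ≤
      6 * Real.exp (-θ * t + m * (2 * κ + 2 * κ ^ 2) * θ ^ 2) := by
  have hθle : ∀ a : α → ℝ, (∀ x, a x ≤ w x) → ∀ x, θ * (a x + κ) ≤ 1 := fun a ha x =>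
    (mul_le_mul_of_nonneg_left (add_le_add_left (ha x) κ) hθ0).trans (hθ x)
  calc _ ≤ drawProb w m Finset.univ fun l =>
        (∃ j ≤ m, t ≤ |compensatedSum w w Finset.univ j l|) ∨
        (m * t < ∑ i ∈ Finset.range m, |sumDev w (fun x => m / lam * w x ^ 2) Finset.univ i l|) ∨
        m * t < ∑ i ∈ Finset.range m, |sumDev w (fun x => κ * m / lam * w x) Finset.univ i l| :=
        drawProb_mono h.w_nonneg fun l _ hl _ ⟨j, hjm, hj⟩ => by
          by_contra! hnot
          obtain ⟨hcomp, hsq, hlin⟩ := hnot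
          exact (abs_sumDev_lt hjm (hcomp j hjm)
            (h.sum_abs_driftDev_le hw hκm ht hmt hl hsq hlin)).not_ge hj
    _ ≤ 2 * Real.exp (-θ * t + m * (2 * κ + 2 * κ ^ 2) * θ ^ 2) +
        (2 * Real.exp (-θ * t + m * (2 * κ + 2 * κ ^ 2) * θ ^ 2) +
          2 * Real.exp (-θ * t + m * (2 * κ + 2 * κ ^ 2) * θ ^ 2)) :=
        (drawProb_or_le h.w_nonneg).trans <| add_le_add
          (drawProb_exists_le_abs_compensatedSum h.momentBounds_weight hθ0 hθ) <|
          (drawProb_or_le h.w_nonneg).trans <| add_le_add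
            (drawProb_mul_lt_sum_abs_sumDev (h.momentBounds_scaledSq hw) hθ0 <|
              hθle _ (h.scaledSq_le hw))
            (drawProb_mul_lt_sum_abs_sumDev (h.momentBounds_scaled hκm) hθ0 <|
              hθle _ (h.scaled_le hκm))
    _ = _ := by ring

end LightWeights

end LightWeights

section Grid

lemma exists_grid (m : ℕ) {N : ℕ} (hN : 0 < N) : ∃ p : ℕ → ℕ, (∀ k, p k ≤ m) ∧ p N = m ∧
    ∀ j ≤ m, ∃ k < N, p k ≤ j ∧ j ≤ p (k + 1) ∧ (p (k + 1) : ℝ) - p k ≤ m / N + 1 := by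
  set q := m / N + 1 with hq
  have hq0 : 0 < q := Nat.succ_pos _
  have hmq : m < N * q := Nat.lt_mul_div_succ m hN
  have hqr : (q : ℝ) ≤ m / N + 1 := by
    rw [hq, Nat.cast_succ]; gcongr; exact Nat.cast_div_le
  refine ⟨fun k => min m (k * q), fun k => min_le_left _ _, min_eq_left hmq.le, fun j hj =>
    ⟨j / q, (Nat.div_lt_iff_lt_mul hq0).2 (hj.trans_lt hmq), ?_, ?_, ?_⟩⟩
  · exact (min_le_right _ _).trans (Nat.div_mul_le_self j q)
  · refine le_min hj ?_
    rw [mul_comm]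
    exact (Nat.lt_mul_div_succ j hq0).le
  · have hstep : min m ((j / q + 1) * q) ≤ min m (j / q * q) + q := by rw [add_one_mul]; omega
    have : ((min m ((j / q + 1) * q) : ℕ) : ℝ) ≤ (min m (j / q * q) : ℕ) + q := by
      exact_mod_cast hstep
    linarith

variable {α : Type*} {w : α → ℝ} {κ lam t θ : ℝ} {m i j : ℕ} {l : List α}

lemma sum_take_le_sum_take (hw : ∀ x, 0 ≤ w x) (hij : i ≤ j) (l : List α) :
    ((l.take i).map w).sum ≤ ((l.take j).map w).sum := by
  refine ((List.take_sublist_take_left hij).map w).sum_le_sum fun y hy => ?_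
  obtain ⟨x, -, rfl⟩ := List.mem_map.1 hy
  exact hw x

variable [Fintype α] [DecidableEq α]

namespace LightWeights

lemma driftDev_le_of_sumDev_le (h : LightWeights w κ lam m) (hl : l.Nodup) (him : i ≤ m)
    (hdev : sumDev w w Finset.univ m l ≤ t) :
    driftDev w w i l ≤ κ * ((κ + 1) * m + t) / lam := by
  have hlam := h.lam_pos
  have hκ := h.kappa_nonneg
  have hmean : meanSum w w m Finset.univ ≤ m * κ :=
    meanSum_le_mul h.w_pos h.lt_card.le fun T _ hT => h.pickExp_sdiff_weight_le hT.le
  refine (h.driftDev_le hl him).trans ?_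
  have hsum := sum_take_le_sum_take h.w_nonneg him l
  rw [sumDev] at hdev
  exact div_le_div_of_nonneg_right (mul_le_mul_of_nonneg_left (by linarith) hκ) hlam.le

lemma sumDev_sub_le (h : LightWeights w κ lam m) (hl : l.Nodup) (hij : i ≤ j) (hjm : j ≤ m)
    (hdev : sumDev w w Finset.univ m l ≤ t)
    (hM : ∀ j ≤ m, |compensatedSum w w Finset.univ j l| < t) :
    sumDev w w Finset.univ j l - sumDev w w Finset.univ i l ≤
      2 * t + (j - i) * (κ * ((κ + 1) * m + t) / lam) := by
  have hdrift : ∑ p ∈ Finset.Ico i j, driftDev w w p l ≤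
      (j - i) * (κ * ((κ + 1) * m + t) / lam) := by
    refine (Finset.sum_le_card_nsmul _ _ _ fun p hp => h.driftDev_le_of_sumDev_le hl
      ((Finset.mem_Ico.1 hp).2.le.trans hjm) hdev).trans_eq ?_
    rw [Nat.card_Ico, nsmul_eq_mul, Nat.cast_sub hij]
  rw [sumDev_sub_sumDev hij]
  linarith [abs_lt.1 (hM j hjm), abs_lt.1 (hM i (hij.trans hjm))]

lemma abs_sumDev_lt_of_grid (h : LightWeights w κ lam m) (ht : 0 < t) (hl : l.Nodup)
    {i i' : ℕ} {b : ℝ} (hij : i ≤ j) (hji' : j ≤ i') (hi'm : i' ≤ m) (hb : (i' : ℝ) - i ≤ b)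
    (herr : b * (κ * ((κ + 1) * m + t) / lam) ≤ t)
    (hdev : sumDev w w Finset.univ m l ≤ t) (hi : |sumDev w w Finset.univ i l| < t)
    (hi' : |sumDev w w Finset.univ i' l| < t)
    (hM : ∀ j ≤ m, |compensatedSum w w Finset.univ j l| < t) :
    |sumDev w w Finset.univ j l| < 4 * t := by
  have hδ : 0 ≤ κ * ((κ + 1) * m + t) / lam := by
    have := h.lam_pos
    have := h.kappa_nonneg
    positivity
  have hij' : (i : ℝ) ≤ j := Nat.cast_le.2 hij
  have hji'' : (j : ℝ) ≤ i' := Nat.cast_le.2 hji'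
  have hleft := (mul_le_mul_of_nonneg_right (by linarith : (j : ℝ) - i ≤ b) hδ).trans herr
  have hright := (mul_le_mul_of_nonneg_right (by linarith : (i' : ℝ) - j ≤ b) hδ).trans herr
  have hupper := h.sumDev_sub_le hl hij (hji'.trans hi'm) hdev hM
  have hlower := h.sumDev_sub_le hl hji' hi'm hdev hM
  rw [abs_lt] at hi hi' ⊢
  constructor <;> linarith

lemma drawProb_exists_four_mul_le_abs_sumDev (h : LightWeights w κ lam m) {N : ℕ} (hN : 0 < N)
    (ht : 0 < t) (herr : (m / N + 1) * (κ * ((κ + 1) * m + t) / lam) ≤ t) (hθ0 : 0 ≤ θ)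
    (hθ : ∀ x, θ * (w x + κ) ≤ 1) :
    drawProb w m Finset.univ (fun l => ∃ j ≤ m, 4 * t ≤ |sumDev w w Finset.univ j l|) ≤
      (2 * N + 4) * Real.exp (-θ * t + m * (2 * κ + 2 * κ ^ 2) * θ ^ 2) := by
  obtain ⟨p, hpm, hpN, hp⟩ := exists_grid m hN
  calc _ ≤ drawProb w m Finset.univ fun l =>
        (∃ k ∈ Finset.range (N + 1), t ≤ |sumDev w w Finset.univ (p k) l|) ∨
        ∃ j ≤ m, t ≤ |compensatedSum w w Finset.univ j l| :=
        drawProb_mono h.w_nonneg fun l _ hl _ ⟨j, hjm, hj⟩ => by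
          by_contra! hnot
          obtain ⟨hgrid, hM⟩ := hnot
          obtain ⟨k, hk, hkj, hjk, hstep⟩ := hp j hjm
          have hdev := (le_abs_self _).trans (hgrid N (by simp)).le
          rw [hpN] at hdev
          exact (h.abs_sumDev_lt_of_grid ht hl hkj hjk (hpm _) hstep herr hdev
            (hgrid k (by simp; omega)) (hgrid (k + 1) (by simpa using hk)) hM).not_ge hj
    _ ≤ ∑ _k ∈ Finset.range (N + 1), 2 * Real.exp (-θ * t + m * (2 * κ + 2 * κ ^ 2) * θ ^ 2) +
        2 * Real.exp (-θ * t + m * (2 * κ + 2 * κ ^ 2) * θ ^ 2) :=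
        (drawProb_or_le h.w_nonneg).trans <| add_le_add
          ((drawProb_exists_le h.w_nonneg _ _).trans <| Finset.sum_le_sum fun k _ =>
            drawProb_le_abs_sumDev h.momentBounds_weight (hpm k) hθ0 hθ)
          (drawProb_exists_le_abs_compensatedSum h.momentBounds_weight hθ0 hθ)
    _ = _ := by
        rw [Finset.sum_const, Finset.card_range, nsmul_eq_mul]; push_cast; ring

end LightWeights

end Grid

section TwoRegimes

lemma exists_chernoff_exponent {s t v μ : ℝ} (hs : 0 < s) (ht : 0 < t) (hv : 0 ≤ v) (hμ : 0 ≤ μ) :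
    ∃ θ, 0 ≤ θ ∧ θ * s ≤ 1 ∧
      -θ * t + μ * v * θ ^ 2 ≤ -(t ^ 2 / (t * s + μ) / (4 * (v + 1))) := by
  have hd : 0 < t * s + 2 * (μ * v) := by positivity
  refine ⟨t / (t * s + 2 * (μ * v)), by positivity, ?_, ?_⟩
  · rw [div_mul_eq_mul_div, div_le_one hd, le_add_iff_nonneg_right]
    positivity
  · have hθ : -(t / (t * s + 2 * (μ * v))) * t + μ * v * (t / (t * s + 2 * (μ * v))) ^ 2 =
        -(t ^ 2 / (2 * (t * s + 2 * (μ * v)))) - t * s * (t / (t * s + 2 * (μ * v))) ^ 2 / 2 := by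
      field_simp
      ring
    have hdrop : 0 ≤ t * s * (t / (t * s + 2 * (μ * v))) ^ 2 / 2 := by positivity
    have hden : 2 * (t * s + 2 * (μ * v)) ≤ (t * s + μ) * (4 * (v + 1)) := by
      have : 0 ≤ t * s * v := by positivity
      have : 0 < t * s := by positivity
      linarith
    have hfrac : t ^ 2 / ((t * s + μ) * (4 * (v + 1))) ≤ t ^ 2 / (2 * (t * s + 2 * (μ * v))) := by
      gcongr
    rw [hθ, div_div]
    linarith

lemma one_le_mul_exp_neg_div {A x : ℝ} (hA : 2 ≤ A) (hx : 2 * x ≤ A) :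
    1 ≤ A * Real.exp (-(x / A)) := by
  have hA0 : 0 < A := by linarith
  have hhalf : x / A ≤ 1 / 2 := by rw [div_le_div_iff₀ hA0 two_pos]; linarith
  calc (1 : ℝ) ≤ A * (1 / 2) := by linarith
    _ ≤ A * Real.exp (-(x / A)) := by
      gcongr
      linarith [Real.add_one_le_exp (-(x / A))]

lemma mul_exp_neg_div_le {A B C x : ℝ} (hA : 0 < A) (hAB : A ≤ B) (hCB : C ≤ B) (hx : 0 ≤ x) :
    C * Real.exp (-(x / A)) ≤ B * Real.exp (-(x / B)) := by
  have hB := hA.trans_le hAB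
  gcongr

lemma mul_exp_neg_div_le_exp_neg_div {A C x : ℝ} (hA : 0 < A) (hC : 0 < C)
    (hx : 2 * A * Real.log C ≤ x) : C * Real.exp (-(x / A)) ≤ Real.exp (-(x / (2 * A))) := by
  have hlog : Real.log C ≤ x / (2 * A) := by rw [le_div_iff₀ (by positivity)]; linarith
  have hhalf : x / A = x / (2 * A) + x / (2 * A) := by field_simp; ring
  calc C * Real.exp (-(x / A)) = Real.exp (Real.log C - x / A) := by
        rw [sub_eq_add_neg, Real.exp_add, Real.exp_log hC]
    _ ≤ Real.exp (-(x / (2 * A))) := by gcongr; linarith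

lemma mul_le_and_mul_le_sq_of_le_div {c s t μ : ℝ} (hs : 0 < s) (ht : 0 < t) (hc : 0 ≤ c)
    (hμ : 0 ≤ μ) (h : c ≤ t ^ 2 / (t * s + μ)) : c * s ≤ t ∧ c * μ ≤ t ^ 2 := by
  rw [le_div_iff₀ (by positivity), mul_add, sq] at h
  refine ⟨le_of_mul_le_mul_right ?_ ht, ?_⟩
  · linarith [mul_nonneg hc hμ]
  · have : 0 ≤ c * (t * s) := by positivity
    linarith [sq t]

lemma grid_error_le {κ lam t μ D N : ℝ} (hκ : 0 ≤ κ) (hlam : 0 < lam) (hN : 1 ≤ N) (hμ : 0 ≤ μ)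
    (ht : κ + 1 ≤ t) (hμlam : 4 * κ * (μ + 1) ≤ lam) (hD : μ ^ 2 ≤ D * t * lam)
    (hDN : 4 * κ * (κ + 1) * D ≤ N) :
    (μ / N + 1) * (κ * ((κ + 1) * μ + t) / lam) ≤ t := by
  have ht0 : 0 < t := by linarith
  have hN0 : 0 < N := by linarith
  have hsq : κ * (κ + 1) * (μ ^ 2 / lam) / N ≤ t / 4 := by
    rw [div_le_iff₀ hN0]
    calc κ * (κ + 1) * (μ ^ 2 / lam) ≤ κ * (κ + 1) * (D * t) := by
          gcongr
          rwa [div_le_iff₀ hlam]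
      _ ≤ t / 4 * N := by linarith [mul_le_mul_of_nonneg_right hDN ht0.le]
  have hfrac : κ * (μ + 1) / lam ≤ 1 / 4 := by rw [div_le_div_iff₀ hlam four_pos]; linarith
  have hlin : κ * (κ + 1) * μ / lam ≤ t / 4 := by
    calc κ * (κ + 1) * μ / lam ≤ (κ + 1) * (κ * (μ + 1) / lam) := by
          rw [mul_comm κ (κ + 1), mul_assoc, mul_div_assoc]; gcongr; linarith
      _ ≤ t / 4 := by linarith [mul_le_mul_of_nonneg_left hfrac (by linarith : 0 ≤ κ + 1)]
  have hconst : t * (κ * (μ / N + 1) / lam) ≤ t / 4 := by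
    have : κ * (μ / N + 1) / lam ≤ κ * (μ + 1) / lam := by gcongr; exact div_le_self hμ hN
    linarith [mul_le_mul_of_nonneg_left (this.trans hfrac) ht0.le]
  calc (μ / N + 1) * (κ * ((κ + 1) * μ + t) / lam) = κ * (κ + 1) * (μ ^ 2 / lam) / N +
        κ * (κ + 1) * μ / lam + t * (κ * (μ / N + 1) / lam) := by field_simp
    _ ≤ t := by linarith

lemma sq_le_two_mul_sq_div {D K s t μ : ℝ} (hs : 0 < s) (ht : 0 < t) (hK : 0 < K) (hDK : D ≤ K)
    (hD : μ ^ 2 ≤ D * t * s ^ 3) (hμ : K * s ^ 2 ≤ μ) :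
    K ^ 2 ≤ 2 * D * (t ^ 2 / (t * s + μ)) := by
  have hμ0 : 0 < μ := lt_of_lt_of_le (by positivity) hμ
  have hD0 : 0 ≤ D := by
    by_contra! hneg
    have : D * t * s ^ 3 < 0 := by
      rw [mul_assoc]; exact mul_neg_of_neg_of_pos hneg (by positivity)
    linarith [sq_nonneg μ]
  have hμts : μ ≤ t * s := by
    refine le_of_mul_le_mul_right (a := K * s ^ 2) ?_ (by positivity)
    calc μ * (K * s ^ 2) ≤ μ ^ 2 := by rw [sq μ]; gcongr
      _ ≤ K * t * s ^ 3 := hD.trans (by gcongr)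
      _ = t * s * (K * s ^ 2) := by ring
  have hKD : K ^ 2 ≤ D * (t / s) := by
    rw [← mul_div_assoc, le_div_iff₀ hs]
    refine le_of_mul_le_mul_right (a := s ^ 3) ?_ (by positivity)
    calc K ^ 2 * s * s ^ 3 = (K * s ^ 2) ^ 2 := by ring
      _ ≤ μ ^ 2 := by gcongr
      _ ≤ D * t * s ^ 3 := hD
  have hhalf : t / s / 2 ≤ t ^ 2 / (t * s + μ) := by
    rw [div_div, div_le_div_iff₀ (by positivity) (by positivity)]
    nlinarith
  nlinarith

variable {α : Type*} [Fintype α] [DecidableEq α] {w : α → ℝ} {κ lam b D K s t : ℝ} {m N : ℕ}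

namespace LightWeights

lemma drawProb_le_of_small (h : LightWeights w κ lam m) (hs : 0 < s) (hws : ∀ x, w x + κ ≤ s)
    (hw : ∀ x, m * w x ≤ lam) (hκm : κ * m ≤ lam) (ht : 0 < t)
    (hmt : m * (2 * κ + 2 * κ ^ 2) ≤ t ^ 2) :
    drawProb w m Finset.univ (fun l => ∃ j ≤ m, 5 * t ≤ |sumDev w w Finset.univ j l|) ≤
      6 * Real.exp (-(t ^ 2 / (t * s + m) / (4 * (2 * κ + 2 * κ ^ 2 + 1)))) := by
  have hκ := h.kappa_nonneg
  obtain ⟨θ, hθ0, hθs, hexp⟩ := exists_chernoff_exponent (v := 2 * κ + 2 * κ ^ 2) hs ht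
    (by positivity) m.cast_nonneg
  refine (h.drawProb_exists_five_mul_le_abs_sumDev hw hκm ht hmt hθ0 fun x =>
    (mul_le_mul_of_nonneg_left (hws x) hθ0).trans hθs).trans ?_
  gcongr

lemma drawProb_le_of_grid (h : LightWeights w κ lam m) (hs : 0 < s) (hws : ∀ x, w x + κ ≤ s)
    (hN : 0 < N) (ht : 0 < t) (herr : (m / N + 1) * (κ * ((κ + 1) * m + t) / lam) ≤ t) :
    drawProb w m Finset.univ (fun l => ∃ j ≤ m, 5 * t ≤ |sumDev w w Finset.univ j l|) ≤
      (2 * N + 4) * Real.exp (-(t ^ 2 / (t * s + m) / (4 * (2 * κ + 2 * κ ^ 2 + 1)))) := by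
  have hκ := h.kappa_nonneg
  obtain ⟨θ, hθ0, hθs, hexp⟩ := exists_chernoff_exponent (v := 2 * κ + 2 * κ ^ 2) hs ht
    (by positivity) m.cast_nonneg
  calc _ ≤ drawProb w m Finset.univ fun l => ∃ j ≤ m, 4 * t ≤ |sumDev w w Finset.univ j l| :=
        drawProb_mono h.w_nonneg fun l _ _ _ ⟨j, hjm, hj⟩ => ⟨j, hjm, by linarith⟩
    _ ≤ _ := h.drawProb_exists_four_mul_le_abs_sumDev hN ht herr hθ0 fun x =>
        (mul_le_mul_of_nonneg_left (hws x) hθ0).trans hθs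
    _ ≤ _ := mul_le_mul_of_nonneg_left (Real.exp_le_exp.2 hexp) (by positivity)

lemma drawProb_le_of_large (h : LightWeights w κ (b * s ^ 3) m) (hb : 0 < b) (hs : 0 < s)
    (hws : ∀ x, w x + κ ≤ s) (hκm : 4 * κ * (m + 1) ≤ b * s ^ 3) (hN : 0 < N)
    (hDN : 4 * κ * (κ + 1) * D ≤ N * b) (hK : 0 < K) (hDK : D ≤ K)
    (hKN : 16 * (2 * κ + 2 * κ ^ 2 + 1) * D * Real.log (2 * N + 4) ≤ K ^ 2) (ht : 0 < t)
    (hκt : κ + 1 ≤ t) (hD : m ^ 2 ≤ D * t * s ^ 3) (hKm : K * s ^ 2 ≤ m) :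
    drawProb w m Finset.univ (fun l => ∃ j ≤ m, 5 * t ≤ |sumDev w w Finset.univ j l|) ≤
      Real.exp (-(t ^ 2 / (t * s + m) / (2 * (4 * (2 * κ + 2 * κ ^ 2 + 1))))) := by
  have hκ := h.kappa_nonneg
  have herr := grid_error_le (D := D / b) (N := N) hκ h.lam_pos (Nat.one_le_cast.2 hN)
    m.cast_nonneg hκt hκm (by field_simp; linarith) (by field_simp; linarith)
  have hE := sq_le_two_mul_sq_div hs ht hK hDK hD hKm
  have hD0 : 0 < D := by
    by_contra! hD0
    linarith [mul_nonpos_of_nonpos_of_nonneg hD0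
      (by positivity : 0 ≤ t ^ 2 / (t * s + m)), pow_pos hK 2]
  have hlog : 2 * (4 * (2 * κ + 2 * κ ^ 2 + 1)) * Real.log (2 * N + 4) ≤ t ^ 2 / (t * s + m) :=
    le_of_mul_le_mul_left (by linarith) hD0
  exact (h.drawProb_le_of_grid hs hws hN ht herr).trans
    (mul_exp_neg_div_le_exp_neg_div (by positivity) (by positivity) hlog)

lemma drawProb_le (h : LightWeights w κ (b * s ^ 3) m) (hb : 0 < b) (hs : 0 < s)
    (hws : ∀ x, w x + κ ≤ s) (hKw : ∀ x, K * w x ≤ b * s) (hκs : κ + 1 ≤ s)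
    (hκm : 4 * κ * (m + 1) ≤ b * s ^ 3) (hN : 0 < N) (hDN : 4 * κ * (κ + 1) * D ≤ N * b)
    (hK : 0 < K) (hDK : D ≤ K)
    (hKN : 16 * (2 * κ + 2 * κ ^ 2 + 1) * D * Real.log (2 * N + 4) ≤ K ^ 2)
    (ht : 0 ≤ t) (hD : m ^ 2 ≤ D * t * s ^ 3) :
    drawProb w m Finset.univ (fun l => ∃ j ≤ m, 5 * t ≤ |sumDev w w Finset.univ j l|) ≤
      8 * (2 * κ + 2 * κ ^ 2 + 1) *
        Real.exp (-(t ^ 2 / (t * s + m) / (8 * (2 * κ + 2 * κ ^ 2 + 1)))) := by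
  have hκ := h.kappa_nonneg
  set V := 2 * κ + 2 * κ ^ 2 + 1 with hV
  have hV1 : 1 ≤ V := by rw [hV]; linarith [sq_nonneg κ]
  set E := t ^ 2 / (t * s + m) with hE
  have hE0 : 0 ≤ E := by positivity
  obtain hEV | hEV := lt_or_ge E V
  · exact (drawProb_le_one h.w_pos h.lt_card.le).trans
      (one_le_mul_exp_neg_div (by linarith) (by linarith))
  have ht0 : 0 < t := ht.lt_of_ne fun ht0 => by
    rw [hE, ← ht0, zero_pow two_ne_zero, zero_div] at hEV
    linarith
  obtain ⟨hVs, hVm⟩ := mul_le_and_mul_le_sq_of_le_div hs ht0 (by linarith) m.cast_nonneg hEV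
  obtain hmK | hmK := le_or_gt (m : ℝ) (K * s ^ 2)
  · have hlight : ∀ x, m * w x ≤ b * s ^ 3 := fun x => by
      calc m * w x ≤ K * s ^ 2 * w x := mul_le_mul_of_nonneg_right hmK (h.w_nonneg x)
        _ = K * w x * s ^ 2 := by ring
        _ ≤ b * s * s ^ 2 := mul_le_mul_of_nonneg_right (hKw x) (sq_nonneg s)
        _ = b * s ^ 3 := by ring
    have hκm0 : 0 ≤ κ * m := by positivity
    have hsmall := h.drawProb_le_of_small hs hws hlight (by linarith) ht0
      (by rw [hV] at hVm; linarith)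
    exact hsmall.trans (mul_exp_neg_div_le (by linarith) (by linarith) (by linarith) hE0)
  · have hst : s ≤ t := (le_mul_of_one_le_left hs.le hV1).trans hVs
    have hlarge := h.drawProb_le_of_large hb hs hws hκm hN hDN hK hDK hKN ht0 (hκs.trans hst) hD
      hmK.le
    rw [← mul_assoc, show (2 : ℝ) * 4 = 8 by norm_num] at hlarge
    exact hlarge.trans (le_mul_of_one_le_left (Real.exp_pos _).le (by linarith))

end LightWeights

theorem exists_forall_drawProb_le.{u} (κ b D : ℝ) (hb : 0 < b) :
    ∃ ε > 0, ∀ {α : Type u} [Fintype α] [DecidableEq α] {w : α → ℝ} {s t : ℝ} {m : ℕ},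
      LightWeights w κ (b * s ^ 3) m → (∀ x, w x ≤ ε * s) → κ + 1 ≤ ε * s →
      4 * κ * (m + 1) ≤ b * s ^ 3 → 0 ≤ t → m ^ 2 ≤ D * t * s ^ 3 →
      drawProb w m Finset.univ (fun l => ∃ j ≤ m, 5 * t ≤ |sumDev w w Finset.univ j l|) ≤
        8 * (2 * κ + 2 * κ ^ 2 + 1) *
          Real.exp (-(t ^ 2 / (t * s + m) / (8 * (2 * κ + 2 * κ ^ 2 + 1)))) := by
  obtain ⟨N, hN⟩ := exists_nat_ge (4 * κ * (κ + 1) * D / b)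
  set L := 16 * (2 * κ + 2 * κ ^ 2 + 1) * D * Real.log (2 * (N + 1 : ℕ) + 4) with hL
  set K := max 1 (max D L) with hK
  have hK1 : 1 ≤ K := le_max_left _ _
  have hK0 : 0 < K := zero_lt_one.trans_le hK1
  have hLK : L ≤ K ^ 2 := ((le_max_right D L).trans (le_max_right _ _)).trans
    (le_self_pow₀ hK1 two_ne_zero)
  have hNb : 4 * κ * (κ + 1) * D ≤ (N + 1 : ℕ) * b := by
    rw [div_le_iff₀ hb] at hN
    push_cast
    linarith
  refine ⟨min (1 / 2) (b / K), by positivity, fun {α _ _ w s t m} h hw hκs hκm ht hD => ?_⟩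
  have hs : 0 < s := by
    have := pos_of_mul_pos_right h.lam_pos hb.le
    exact (Odd.pow_pos_iff (by decide)).1 this
  have hhalf : min (1 / 2) (b / K) * s ≤ s / 2 := by
    linarith [mul_le_mul_of_nonneg_right (min_le_left (1 / 2) (b / K)) hs.le]
  have hbK : min (1 / 2) (b / K) * s ≤ b / K * s :=
    mul_le_mul_of_nonneg_right (min_le_right (1 / 2) (b / K)) hs.le
  refine h.drawProb_le hb hs (fun x => by linarith [hw x]) (fun x => ?_) (by linarith) hκm
    N.succ_pos hNb hK0 ((le_max_left D L).trans (le_max_right _ _)) hLK ht hD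
  calc K * w x ≤ K * (b / K * s) := mul_le_mul_of_nonneg_left ((hw x).trans hbK) hK0.le
    _ = b * s := by field_simp

end TwoRegimes

section Law

variable {α : Type*} [DecidableEq α] {w : α → ℝ} {k : ℕ} {R : Finset α}

/-- The probability of picking `x` from `R`, with probability proportional to `w`. -/
def pickProb (w : α → ℝ) (R : Finset α) (x : α) : ℝ :=
  if x ∈ R then w x / ∑ y ∈ R, w y else 0

lemma pickProb_nonneg (hw : ∀ x, 0 ≤ w x) (x : α) : 0 ≤ pickProb w R x := by
  rw [pickProb]
  split_ifs
  exacts [div_nonneg (hw x) (Finset.sum_nonneg fun y _ => hw y), le_rfl]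

/-- The probability that a size-biased order of `R` starts with `ω 0, ω 1, …, ω (k - 1)`. -/
def orderProb (w : α → ℝ) (R : Finset α) (ω : Fin k → α) : ℝ :=
  ∏ i, pickProb w (R \ (Finset.univ.filter (· < i)).image ω) (ω i)

lemma orderProb_nonneg (hw : ∀ x, 0 ≤ w x) (ω : Fin k → α) : 0 ≤ orderProb w R ω :=
  Finset.prod_nonneg fun _ _ => pickProb_nonneg hw _

lemma image_cons_filter_lt_succ (x : α) (ω : Fin k → α) (i : Fin k) :
    (Finset.univ.filter (· < i.succ)).image (Fin.cons x ω : Fin (k + 1) → α) =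
      insert x ((Finset.univ.filter (· < i)).image ω) := by
  ext y
  simp [Fin.exists_fin_succ, eq_comm]

lemma orderProb_cons (x : α) (ω : Fin k → α) :
    orderProb w R (Fin.cons x ω : Fin (k + 1) → α) =
      pickProb w R x * orderProb w (R.erase x) ω := by
  simp only [orderProb, Fin.prod_univ_succ, image_cons_filter_lt_succ, Fin.cons_zero,
    Fin.cons_succ, Finset.sdiff_insert, Finset.erase_sdiff_comm, Fin.not_lt_zero,
    Finset.filter_false, Finset.image_empty, Finset.sdiff_empty]

lemma orderProb_eq_zero {ω : Fin k → α} (hω : ¬ Function.Injective ω) : orderProb w R ω = 0 := by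
  obtain ⟨i, j, hij, hlt⟩ : ∃ i j, ω i = ω j ∧ i < j := by
    obtain ⟨i, j, hij, hne⟩ := Function.not_injective_iff.1 hω
    rcases hne.lt_or_gt with hlt | hlt
    exacts [⟨i, j, hij, hlt⟩, ⟨j, i, hij.symm, hlt⟩]
  refine Finset.prod_eq_zero (Finset.mem_univ j) (if_neg fun hmem => ?_)
  exact (Finset.mem_sdiff.1 hmem).2 (Finset.mem_image.2 ⟨i, by simpa using hlt, hij⟩)

variable [Fintype α]

lemma pickExp_eq_sum (f : α → ℝ) : pickExp w R f = ∑ x, pickProb w R x * f x := by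
  simp only [pickExp, pickProb, ite_mul, zero_mul, Finset.sum_ite_mem, Finset.univ_inter,
    Finset.sum_div, div_mul_eq_mul_div]

lemma drawExp_eq_sum (f : List α → ℝ) :
    drawExp w k R f = ∑ ω : Fin k → α, orderProb w R ω * f (List.ofFn ω) := by
  induction k generalizing R f with
  | zero => simp [drawExp, orderProb]
  | succ k ih =>
    rw [← (Fin.consEquiv fun _ : Fin (k + 1) => α).sum_comp, Fintype.sum_prod_type, drawExp_succ,
      pickExp_eq_sum]
    simp only [ih, Fin.consEquiv, Equiv.coe_fn_mk, orderProb_cons, List.ofFn_cons, Finset.mul_sum,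
      mul_assoc]

lemma orderProb_univ_of_injective {ω : Fin k → α} (hω : Function.Injective ω) :
    orderProb w Finset.univ ω =
      ∏ i, w (ω i) / ((∑ x, w x) - ∑ j ∈ Finset.univ.filter fun j => j < i, w (ω j)) := by
  refine Finset.prod_congr rfl fun i _ => ?_
  rw [pickProb, if_pos (by simp [hω.eq_iff]),
    ← Finset.sum_sdiff (Finset.subset_univ ((Finset.univ.filter (· < i)).image ω)),
    Finset.sum_image hω.injOn, add_sub_cancel_right]

variable {n : ℕ} {wn : Fin n → ℝ}

lemma drawExp_univ_eq_sum_perm (f : List (Fin n) → ℝ) :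
    drawExp wn n Finset.univ f =
      ∑ σ : Equiv.Perm (Fin n), orderProb wn Finset.univ σ * f (List.ofFn σ) := by
  rw [drawExp_eq_sum]
  refine (Finset.sum_of_injOn (fun σ : Equiv.Perm (Fin n) => ⇑σ) DFunLike.coe_injective.injOn
    (by simp) (fun ω _ hω => ?_) fun _ _ => rfl).symm
  rw [orderProb_eq_zero, zero_mul]
  exact fun hinj => hω ⟨.ofBijective ω (Finite.injective_iff_bijective.1 hinj), by simp, rfl⟩

lemma sbMeasure_eq_sum : sbMeasure n wn = ∑ σ : Equiv.Perm (Fin n),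
    ENNReal.ofReal (orderProb wn Finset.univ σ) • Measure.dirac ⇑σ := by
  rw [sbMeasure, Measure.sum_fintype]
  exact Finset.sum_congr rfl fun σ _ => by rw [orderProb_univ_of_injective σ.injective]

lemma integral_sbMeasure (hw : ∀ x, 0 ≤ wn x) (f : List (Fin n) → ℝ) :
    ∫ ω, f (List.ofFn ω) ∂sbMeasure n wn = drawExp wn n Finset.univ f := by
  rw [sbMeasure_eq_sum, drawExp_univ_eq_sum_perm, integral_finsetSum_measure fun σ _ =>
    Integrable.of_finite.smul_measure ENNReal.ofReal_ne_top]
  simp only [integral_smul_measure, integral_dirac, smul_eq_mul,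
    ENNReal.toReal_ofReal (orderProb_nonneg hw _)]

lemma sbMeasure_setOf (hw : ∀ x, 0 ≤ wn x) (P : List (Fin n) → Prop) :
    sbMeasure n wn {ω | P (List.ofFn ω)} = ENNReal.ofReal (drawProb wn n Finset.univ P) := by
  rw [sbMeasure_eq_sum, drawProb, drawExp_univ_eq_sum_perm, ENNReal.ofReal_sum_of_nonneg
    fun σ _ => mul_nonneg (orderProb_nonneg hw _) (by positivity), Measure.finsetSum_apply]
  refine Finset.sum_congr rfl fun σ _ => ?_
  rw [Measure.smul_apply, Measure.dirac_apply' _ (Set.toFinite _).measurableSet, smul_eq_mul,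
    ENNReal.ofReal_mul (orderProb_nonneg hw _)]
  by_cases hP : P (List.ofFn σ) <;> simp [hP]

lemma sum_range_succ_sbW (ω : Fin n → Fin n) (j : ℕ) :
    ∑ k ∈ Finset.range (j + 1), sbW wn ω k = (((List.ofFn ω).take j).map wn).sum := by
  induction j with
  | zero => simp [sbW]
  | succ j ih =>
    rw [Finset.sum_range_succ, ih, List.take_add_one, List.map_append, List.sum_append]
    by_cases hj : j < n <;> simp [sbW, hj]

lemma sum_Icc_sbW (ω : Fin n → Fin n) {i j : ℕ} (hij : i ≤ j) :
    ∑ k ∈ Finset.Icc i j, sbW wn ω k =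
      (((List.ofFn ω).take j).map wn).sum - (((List.ofFn ω).take (i - 1)).map wn).sum := by
  rw [← Finset.Ico_add_one_right_eq_Icc, Finset.sum_Ico_eq_sub _ (by omega), sum_range_succ_sbW]
  rcases i with _ | i
  · simp
  · rw [sum_range_succ_sbW, Nat.add_sub_cancel]

lemma sum_Icc_sbW_sub_integral (hw : ∀ x, 0 < wn x) {i j : ℕ} (hij : i ≤ j) (hj : j ≤ n)
    (ω : Fin n → Fin n) :
    (∑ k ∈ Finset.Icc i j, sbW wn ω k) -
        ∫ ω', ∑ k ∈ Finset.Icc i j, sbW wn ω' k ∂sbMeasure n wn =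
      sumDev wn wn Finset.univ j (List.ofFn ω) -
        sumDev wn wn Finset.univ (i - 1) (List.ofFn ω) := by
  have hmean : ∀ t ≤ n, drawExp wn n Finset.univ (fun l => ((l.take t).map wn).sum) =
      meanSum wn wn t Finset.univ := fun t ht =>
    drawExp_take (f := fun l => (l.map wn).sum) hw ht (by simp)
  simp only [sum_Icc_sbW _ hij]
  rw [integral_sbMeasure (fun x => (hw x).le)
      fun l => ((l.take j).map wn).sum - ((l.take (i - 1)).map wn).sum,
    drawExp_sub, hmean j hj, hmean (i - 1) (by omega), sumDev, sumDev]
  ring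

lemma sbMeasure_exists_le_abs_le (hw : ∀ x, 0 < wn x) {m : ℕ} (hm : m ≤ n) (y : ℝ) :
    sbMeasure n wn {ω : Fin n → Fin n | ∃ i j : ℕ, i ≤ j ∧ j ≤ m ∧
        y ≤ |(∑ k ∈ Finset.Icc i j, sbW wn ω k) -
          ∫ ω', ∑ k ∈ Finset.Icc i j, sbW wn ω' k ∂sbMeasure n wn|} ≤
      ENNReal.ofReal (drawProb wn m Finset.univ fun l =>
        ∃ j ≤ m, y / 2 ≤ |sumDev wn wn Finset.univ j l|) := by
  rw [← drawProb_take hw hm (by simp), ← sbMeasure_setOf fun x => (hw x).le]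
  refine measure_mono ?_
  rintro ω ⟨i, j, hij, hj, hle⟩
  rw [sum_Icc_sbW_sub_integral hw hij (hj.trans hm), ← sumDev_take hj, ← sumDev_take (k := m)
    (by omega : i - 1 ≤ m)] at hle
  by_contra! hlt
  simp only [Set.mem_ofPred_eq, not_exists, not_and, not_le] at hlt
  linarith [hlt j hj, hlt (i - 1) (by omega), abs_sub (sumDev wn wn Finset.univ j
    ((List.ofFn ω).take m)) (sumDev wn wn Finset.univ (i - 1) ((List.ofFn ω).take m))]

end Law

section Asymptotics

lemma le_one_add_pow_three {u : ℝ} (hu : 0 < u) : u ≤ 1 + u ^ 3 := by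
  nlinarith [mul_nonneg hu.le (sq_nonneg (u - 1)), sq_nonneg (u - 1)]

lemma sq_le_one_add_pow_three {u : ℝ} (hu : 0 < u) : u ^ 2 ≤ 1 + u ^ 3 := by
  nlinarith [mul_nonneg hu.le (sq_nonneg (u - 1)), sq_nonneg (u - 1)]

lemma sum_le_mul_card_of_le_one_add_pow_three {α : Type*} [Fintype α] {w f : α → ℝ} {K : ℝ}
    (hf : ∀ x, f x ≤ 1 + w x ^ 3) (hcube : ∑ x, w x ^ 3 ≤ K * Fintype.card α) :
    ∑ x, f x ≤ (K + 1) * Fintype.card α := by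
  calc ∑ x, f x ≤ ∑ x, (1 + w x ^ 3) := Finset.sum_le_sum fun x _ => hf x
    _ = Fintype.card α + ∑ x, w x ^ 3 := by simp [Finset.sum_add_distrib]
    _ ≤ (K + 1) * Fintype.card α := by linarith

lemma lightWeights_of_sum_cube_le {α : Type*} [Fintype α] [DecidableEq α] [Nonempty α]
    {w : α → ℝ} {c K : ℝ} {m : ℕ} (hw : ∀ x, 0 < w x) (hc : 0 < c)
    (hsum : c * Fintype.card α ≤ ∑ x, w x) (hcube : ∑ x, w x ^ 3 ≤ K * Fintype.card α)
    (hm : 4 * (K + 1) * m ≤ c ^ 2 * Fintype.card α) :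
    LightWeights w (2 * (K + 1) / c) (c / 2 * Fintype.card α) m := by
  have hcard : (0 : ℝ) < Fintype.card α := Nat.cast_pos.2 Fintype.card_pos
  have hsq := sum_le_mul_card_of_le_one_add_pow_three
    (fun x => sq_le_one_add_pow_three (hw x)) hcube
  have hκlam : 2 * (K + 1) / c * (c / 2 * Fintype.card α) = (K + 1) * Fintype.card α := by
    field_simp
  refine ⟨hw, by positivity, fun T hT => ?_, hsq.trans_eq hκlam.symm, by rw [hκlam]; linarith⟩
  have hremoved : ∑ x ∈ T, w x ≤ c / 2 * Fintype.card α := by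
    refine abs_le_of_sq_le_sq' ?_ (by positivity) |>.2
    calc (∑ x ∈ T, w x) ^ 2 ≤ T.card * ∑ x ∈ T, w x ^ 2 := sq_sum_le_card_mul_sum_sq
      _ ≤ m * ((K + 1) * Fintype.card α) := by
          gcongr
          exact (Finset.sum_le_univ_sum_of_nonneg fun x => sq_nonneg (w x)).trans hsq
      _ ≤ (c / 2 * Fintype.card α) ^ 2 := by linarith [mul_le_mul_of_nonneg_right hm hcard.le]
  linarith [Finset.sum_sdiff (f := w) (Finset.subset_univ T)]

lemma mul_exp_neg_tenth_le {C y s μ : ℝ} (hC : 0 < C) (hy : 0 ≤ y) (hs : 0 ≤ s) (hμ : 0 ≤ μ) :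
    C * Real.exp (-((y / 10) ^ 2 / (y / 10 * s + μ) / C)) ≤
      100 * C * Real.exp (-y ^ 2 / (100 * C * (y * s + μ))) := by
  have hexp : y ^ 2 / (100 * C * (y * s + μ)) ≤ (y / 10) ^ 2 / (y / 10 * s + μ) / C := by
    obtain rfl | hy := hy.eq_or_lt
    · simp
    obtain hpos | hzero := (show 0 ≤ y / 10 * s + μ by positivity).lt_or_eq
    · calc y ^ 2 / (100 * C * (y * s + μ)) = (y / 10) ^ 2 / (y * s + μ) / C := by field_simp; ring
        _ ≤ _ := by gcongr; linarith
    · obtain ⟨hys, rfl⟩ := (add_eq_zero_iff_of_nonneg (by positivity) hμ).1 hzero.symm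
      rw [show y * s + 0 = 0 by linarith, hys]
      simp
  rw [neg_div]
  gcongr
  linarith

lemma eventually_mul_add_one_le {m : ℕ → ℕ}
    (hm : (fun n => (m n : ℝ)) =o[atTop] fun n : ℕ => (n : ℝ)) (C : ℝ) {c : ℝ} (hc : 0 < c) :
    ∀ᶠ n in atTop, C * (m n + 1 : ℝ) ≤ c * n := by
  have hone : (fun _ : ℕ => (1 : ℝ)) =o[atTop] fun n : ℕ => (n : ℝ) :=
    isLittleO_const_left.2 (Or.inr (tendsto_norm_atTop_atTop.comp tendsto_natCast_atTop_atTop))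
  filter_upwards [((hm.add hone).const_mul_left C).bound hc] with n hn
  rw [Real.norm_natCast] at hn
  exact (le_abs_self _).trans hn

lemma ell_nonneg {w : ∀ n : ℕ, Fin n → ℝ} (hw : ∀ n i, 0 < w n i) (n : ℕ) : 0 ≤ ell w n :=
  Finset.sum_nonneg fun i _ => (hw n i).le

lemma exists_eventually_mul_le_ell {w : ∀ n : ℕ, Fin n → ℝ} (hw : ∀ n i, 0 < w n i)
    (hell : (fun n : ℕ => (n : ℝ)) =O[atTop] ell w) :
    ∃ c > 0, ∀ᶠ n : ℕ in atTop, c * n ≤ ell w n := by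
  obtain ⟨C, hC, hbound⟩ := hell.exists_pos
  refine ⟨C⁻¹, inv_pos.2 hC, hbound.bound.mono fun n hn => ?_⟩
  rwa [Real.norm_natCast, Real.norm_of_nonneg (ell_nonneg hw n), ← inv_mul_le_iff₀ hC] at hn

lemma exists_eventually_sum_cube_le {w : ∀ n : ℕ, Fin n → ℝ}
    (hcube : (fun n => ∑ i, w n i ^ 3) =O[atTop] fun n : ℕ => (n : ℝ)) :
    ∃ K > 0, ∀ᶠ n : ℕ in atTop, ∑ i, w n i ^ 3 ≤ K * n := by
  obtain ⟨K, hK, hbound⟩ := hcube.exists_pos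
  refine ⟨K, hK, hbound.bound.mono fun n hn => ?_⟩
  rw [Real.norm_natCast] at hn
  exact (le_abs_self _).trans hn

lemma eventually_forall_le_mul_rpow {w : ∀ n : ℕ, Fin n → ℝ}
    (hmax : (fun n => ⨆ i, w n i) =o[atTop] fun n : ℕ => (n : ℝ) ^ ((1 : ℝ) / 3)) {ε : ℝ}
    (hε : 0 < ε) : ∀ᶠ n : ℕ in atTop, ∀ i, w n i ≤ ε * (n : ℝ) ^ ((1 : ℝ) / 3) := by
  filter_upwards [hmax.bound hε] with n hn i
  rw [Real.norm_of_nonneg (by positivity : 0 ≤ (n : ℝ) ^ ((1 : ℝ) / 3))] at hn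
  exact (le_ciSup (Set.finite_range _).bddAbove i).trans ((le_abs_self _).trans hn)

lemma exists_eventually_sq_le {w : ∀ n : ℕ, Fin n → ℝ} {m : ℕ → ℕ} {y : ℕ → ℝ} {K : ℝ}
    (hw : ∀ n i, 0 < w n i) (hK : ∀ᶠ n : ℕ in atTop, ∑ i, w n i ^ 3 ≤ K * n)
    (hy : ∀ᶠ n in atTop, 0 ≤ y n)
    (hmy : (fun n => (m n : ℝ) ^ 2) =O[atTop] fun n => y n * ell w n) :
    ∃ D, ∀ᶠ n : ℕ in atTop, (m n : ℝ) ^ 2 ≤ D * (y n / 10) * n := by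
  obtain ⟨C, hC, hbound⟩ := hmy.exists_pos
  refine ⟨10 * C * (K + 1), ?_⟩
  filter_upwards [hK, hy, hbound.bound] with n hK hy hn
  have hell : ell w n ≤ (K + 1) * n := by
    simpa [ell] using sum_le_mul_card_of_le_one_add_pow_three
      (fun i => le_one_add_pow_three (hw n i)) (by simpa using hK)
  rw [Real.norm_of_nonneg (sq_nonneg _),
    Real.norm_of_nonneg (mul_nonneg hy (ell_nonneg hw n))] at hn
  calc (m n : ℝ) ^ 2 ≤ C * (y n * ((K + 1) * n)) := hn.trans (by gcongr)
    _ = 10 * C * (K + 1) * (y n / 10) * n := by ring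

end Asymptotics

section Moments

lemma integral_pos_of_ae_pos {Ω : Type*} [MeasurableSpace Ω] {μ : Measure Ω} [NeZero μ]
    {f : Ω → ℝ} (hf : Integrable f μ) (hpos : ∀ᵐ x ∂μ, 0 < f x) : 0 < ∫ x, f x ∂μ := by
  rw [integral_pos_iff_support_of_nonneg_ae (hpos.mono fun x hx => hx.le) hf, pos_iff_ne_zero]
  refine fun hzero => NeZero.ne μ (ae_eq_bot.1 (eventually_false_iff_eq_bot.1 ?_))
  filter_upwards [hpos, measure_eq_zero_iff_ae_notMem.1 hzero] with x hx hx'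
  exact hx' hx.ne'

variable {w : ∀ n : ℕ, Fin n → ℝ} {μ : Measure ℝ}

lemma integral_id_pos (hC : CondC w μ) : 0 < ∫ x, x ∂μ := by
  have := hC.isProb
  refine integral_pos_of_ae_pos ?_ hC.pos
  refine ((integrable_const 1).add hC.int3).mono' (by fun_prop) ?_
  filter_upwards [hC.pos] with x hx
  exact (Real.norm_of_nonneg hx.le).trans_le (le_one_add_pow_three hx)

lemma isBigO_ell (hC : CondC w μ) : (fun n : ℕ => (n : ℝ)) =O[atTop] ell w := by
  have hrpow : (fun n : ℕ => (n : ℝ) ^ ((2 : ℝ) / 3)) =O[atTop] fun n : ℕ => (n : ℝ) := by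
    refine IsBigO.of_bound 1 ((eventually_ge_atTop 1).mono fun n hn => ?_)
    rw [Real.norm_of_nonneg (by positivity), Real.norm_natCast, one_mul]
    exact Real.rpow_le_self_of_one_le (by exact_mod_cast hn) (by norm_num)
  have hmean : (fun n : ℕ => (n : ℝ)) =O[atTop] fun n : ℕ => (∫ x, x ∂μ) * (n : ℝ) :=
    isBigO_self_const_mul (integral_id_pos hC).ne' _ _
  have hequiv : ell w ~[atTop] fun n : ℕ => (∫ x, x ∂μ) * (n : ℝ) :=
    hC.ell_asymp.trans_isBigO (hrpow.trans hmean)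
  exact hmean.trans hequiv.isBigO_symm

lemma isBigO_sum_cube (hC : CondC w μ) :
    (fun n => ∑ i, w n i ^ 3) =O[atTop] fun n : ℕ => (n : ℝ) := by
  have hone : (fun _ : ℕ => (1 : ℝ)) =O[atTop] fun n : ℕ => (n : ℝ) := by
    refine IsBigO.of_bound 1 ((eventually_ge_atTop 1).mono fun n hn => ?_)
    simpa using hn
  exact ((hC.cube_asymp.isBigO.trans hone).add
    (isBigO_const_mul_self (∫ x, x ^ 3 ∂μ) (fun n : ℕ => (n : ℝ)) atTop)).congr_left
      fun n => sub_add_cancel _ _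

end Moments

end

end SizeBiased

theorem size_biased_sum_concentration_general {w : ∀ n : ℕ, Fin n → ℝ} (hw : ∀ n i, 0 < w n i)
    (hell : (fun n : ℕ => (n : ℝ)) =O[atTop] ell w)
    (hcube : (fun n => ∑ i, w n i ^ 3) =O[atTop] fun n : ℕ => (n : ℝ))
    (hmax : (fun n => ⨆ i, w n i) =o[atTop] fun n : ℕ => (n : ℝ) ^ ((1 : ℝ) / 3)) :
    ∃ A > (0 : ℝ), ∀ (m : ℕ → ℕ) (y : ℕ → ℝ),
      ((fun n => (m n : ℝ)) =o[atTop] fun n : ℕ => (n : ℝ)) → (∀ᶠ n in atTop, 0 ≤ y n) →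
      ((fun n => (m n : ℝ) ^ 2) =O[atTop] fun n => y n * ell w n) →
      ∀ᶠ n : ℕ in atTop,
        sbMeasure n (w n)
          {ω : Fin n → Fin n | ∃ i j : ℕ, i ≤ j ∧ j ≤ m n ∧
            y n ≤ |(∑ k ∈ Finset.Icc i j, sbW (w n) ω k) -
                ∫ ω', ∑ k ∈ Finset.Icc i j, sbW (w n) ω' k ∂sbMeasure n (w n)|}
        ≤ ENNReal.ofReal
            (A * Real.exp (-(y n) ^ 2 / (A * (y n * (n : ℝ) ^ ((1 : ℝ) / 3) + (m n : ℝ))))) := by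
  obtain ⟨c, hc, hc_le⟩ := SizeBiased.exists_eventually_mul_le_ell hw hell
  obtain ⟨K, hK, hK_le⟩ := SizeBiased.exists_eventually_sum_cube_le hcube
  set κ := 2 * (K + 1) / c
  refine ⟨100 * (8 * (2 * κ + 2 * κ ^ 2 + 1)), by positivity, fun m y hm hy hmy => ?_⟩
  obtain ⟨D, hD⟩ := SizeBiased.exists_eventually_sq_le hw hK_le hy hmy
  obtain ⟨ε, hε, hconc⟩ := SizeBiased.exists_forall_drawProb_le κ (c / 2) D (half_pos hc)
  have hs_top : Tendsto (fun n : ℕ => ε * (n : ℝ) ^ ((1 : ℝ) / 3)) atTop atTop :=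
    ((tendsto_rpow_atTop (by norm_num)).comp tendsto_natCast_atTop_atTop).const_mul_atTop hε
  filter_upwards [hc_le, hK_le, hy, hD, SizeBiased.eventually_forall_le_mul_rpow hmax hε,
    hs_top.eventually_ge_atTop (κ + 1),
    SizeBiased.eventually_mul_add_one_le hm (4 * κ) (half_pos hc),
    SizeBiased.eventually_mul_add_one_le hm (4 * (K + 1)) (sq_pos_of_pos hc), eventually_ne_atTop 0]
    with n hsum hcube hy hD hw_le hκs hκm hKm hn
  have := NeZero.mk hn
  have hlight : SizeBiased.LightWeights (w n) κ (c / 2 * n) (m n) := by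
    simpa using SizeBiased.lightWeights_of_sum_cube_le (hw n) hc (by simpa [ell] using hsum)
      (by simpa using hcube) (by simpa using le_trans (by gcongr; simp) hKm)
  have hm_le : m n ≤ n := by simpa using hlight.lt_card.le
  refine (SizeBiased.sbMeasure_exists_le_abs_le (hw n) hm_le (y n)).trans
    (ENNReal.ofReal_le_ofReal ?_)
  have hn_pow : (n : ℝ) = ((n : ℝ) ^ ((1 : ℝ) / 3)) ^ 3 := by
    rw [← Real.rpow_mul_natCast n.cast_nonneg]; norm_num
  rw [hn_pow] at hlight hκm hD
  rw [show y n / 2 = 5 * (y n / 10) by ring]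
  exact (hconc hlight hw_le hκs hκm (by positivity) hD).trans
    (SizeBiased.mul_exp_neg_tenth_le (by positivity) hy (by positivity) (m n).cast_nonneg)

/-- Theorem of the paper: concentration of the size-biased sums
sampled without replacement, uniformly over `0 ≤ i ≤ j ≤ m`. -/
theorem size_biased_sum_concentration
    (w : ∀ n : ℕ, Fin n → ℝ) (μ : Measure ℝ) (hC : CondC w μ) :
    ∃ Abar > (0 : ℝ), ∃ A > (0 : ℝ), ∀ m : ℕ → ℕ, ∀ y : ℕ → ℝ,
      Cond2 w Abar (fun n => (m n : ℝ)) y →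
      ∀ᶠ n : ℕ in atTop,
        sbMeasure n (w n)
          {ω : Fin n → Fin n | ∃ i j : ℕ, i ≤ j ∧ j ≤ m n ∧
            y n ≤ |(∑ k ∈ Finset.Icc i j, sbW (w n) ω k) -
                ∫ ω', ∑ k ∈ Finset.Icc i j, sbW (w n) ω' k ∂sbMeasure n (w n)|}
        ≤ ENNReal.ofReal
            (A * Real.exp (-(y n) ^ 2 / (A * (y n * (n : ℝ) ^ ((1 : ℝ) / 3) + (m n : ℝ))))) := by
  obtain ⟨A, hA, hbound⟩ := size_biased_sum_concentration_general hC.w_pos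
    (SizeBiased.isBigO_ell hC) (SizeBiased.isBigO_sum_cube hC) hC.max_asymp
  exact ⟨1, one_pos, A, hA, fun m y h =>
    hbound m y h.a_lito (h.b_top.eventually_ge_atTop 0) h.a_sq_bigO⟩
end
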